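/- Let k be a field, B = k[x,y], d ≥ 3, and g = (g₁,g₂,g₃) a triple of degree-d forms such that the ideal (g₁,g₂,g₃)B has height 2 and the inclusion A = k[g₁,g₂,g₃] ⊆ V (the d-th Veronese subring of B) is birational. Let c = A :_{Quot(A)} V be the conductor and L the preimage of c in T = k[T₁,T₂,T₃]. Then the homogeneous minimal free T-resolution of T/L has the form 0 → T^{d-2}(−d+1) → T^{d-1}(−d+2) → T → T/L → 0; in particular T/L is Cohen–Macaulay of dimension 1, and the canonical module ω_{T/L} is isomorphic to V/A. -/

import Mathlib

set_option maxHeartbeats 1000000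
set_option synthInstance.maxHeartbeats 1000000

open MvPolynomial

/-- The height of an ideal: the infimum of the heights of the primes containing it. -/
noncomputable def idealHeight {R : Type*} [CommRing R] (I : Ideal R) : ℕ∞ :=
  ⨅ (P : PrimeSpectrum R) (_ : I ≤ P.asIdeal), Order.height P

/-- The `d`-th Veronese subring `V = k[B_d]` of `B = k[x,y]`. -/
noncomputable def veronese (k : Type*) [Field k] (d : ℕ) :
    Subalgebra k (MvPolynomial (Fin 2) k) :=
  Algebra.adjoin k {f : MvPolynomial (Fin 2) k | f.IsHomogeneous d}

namespace HB
open Matrix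

variable {R : Type*} [CommRing R] {n : ℕ}

/-- signed maximal minors -/
noncomputable def Dl (P : Matrix (Fin n) (Fin (n+1)) R) (i : Fin (n+1)) : R :=
  (-1)^(i : ℕ) * (P.submatrix id i.succAbove).det

/-- add a row on top -/
def Aug (r : Fin (n+1) → R) (P : Matrix (Fin n) (Fin (n+1)) R) :
    Matrix (Fin (n+1)) (Fin (n+1)) R := Matrix.of (Fin.cons r P)

lemma Aug_zero (r : Fin (n+1) → R) (P : Matrix (Fin n) (Fin (n+1)) R) (i) :
    Aug r P 0 i = r i := rfl
lemma Aug_succ (r : Fin (n+1) → R) (P : Matrix (Fin n) (Fin (n+1)) R) (j i) :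
    Aug r P (Fin.succ j) i = P j i := rfl

lemma det_Aug (r : Fin (n+1) → R) (P : Matrix (Fin n) (Fin (n+1)) R) :
    (Aug r P).det = ∑ i, r i * Dl P i := by
  rw [Matrix.det_succ_row_zero]
  refine Finset.sum_congr rfl fun i _ => ?_
  have : (Aug r P).submatrix Fin.succ i.succAbove = P.submatrix id i.succAbove := by
    ext a b; rfl
  rw [this, Aug_zero, Dl]; ring

lemma adj_Aug (r : Fin (n+1) → R) (P : Matrix (Fin n) (Fin (n+1)) R) (i) :
    (Aug r P).adjugate i 0 = Dl P i := by
  rw [Matrix.adjugate_fin_succ_eq_det_submatrix]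
  have : (Aug r P).submatrix (Fin.succAbove 0) i.succAbove = P.submatrix id i.succAbove := by
    ext a b; rw [Fin.succAbove_zero]; rfl
  rw [this, Dl]; simp

lemma det_Aug_single (P : Matrix (Fin n) (Fin (n+1)) R) (i) :
    (Aug (Pi.single i 1) P).det = Dl P i := by
  rw [det_Aug, Finset.sum_eq_single i] <;> simp +contextual [Pi.single_apply]

lemma mulVec_Dl (P : Matrix (Fin n) (Fin (n+1)) R) : P *ᵥ (Dl P) = 0 := by
  ext j
  have h := congrFun (congrFun (Matrix.mul_adjugate (Aug 0 P)) j.succ) 0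
  rw [Matrix.mul_apply] at h
  simp only [adj_Aug, Aug_succ] at h
  simpa [Matrix.mulVec, dotProduct] using h

lemma ker_rel (P : Matrix (Fin n) (Fin (n+1)) R) (u : Fin (n+1) → R) (hu : P *ᵥ u = 0) (i j) :
    Dl P i * u j = Dl P j * u i := by
  have h : (Aug (Pi.single i 1) P).adjugate *ᵥ (Aug (Pi.single i 1) P *ᵥ u) = Dl P i • u := by
    rw [Matrix.mulVec_mulVec, Matrix.adjugate_mul, det_Aug_single, Matrix.smul_mulVec,
      Matrix.one_mulVec]
  have h2 : Aug (Pi.single i 1) P *ᵥ u = Pi.single 0 (u i) := by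
    ext a
    refine Fin.cases ?_ (fun b => ?_) a
    · simp only [Matrix.mulVec, dotProduct, Aug_zero]; simp [Pi.single_apply]
    · have := congrFun hu b
      simp only [Matrix.mulVec, dotProduct, Aug_succ] at this ⊢
      rw [this]; simp
  rw [h2] at h
  have := congrFun h j
  rw [Matrix.mulVec_single] at this
  simp [adj_Aug] at this
  exact this.symm

lemma Dl_smul_mem (P : Matrix (Fin n) (Fin (n+1)) R) (i) (z : Fin n → R) :
    ∃ u, P *ᵥ u = Dl P i • z := by
  refine ⟨(Aug (Pi.single i 1) P).adjugate *ᵥ (Fin.cons 0 z), ?_⟩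
  have h : (Aug (Pi.single i 1) P) *ᵥ ((Aug (Pi.single i 1) P).adjugate *ᵥ (Fin.cons 0 z))
      = Dl P i • Fin.cons 0 z := by
    rw [Matrix.mulVec_mulVec, Matrix.mul_adjugate, det_Aug_single, Matrix.smul_mulVec,
      Matrix.one_mulVec]
  ext j
  have := congrFun h j.succ
  simpa [Matrix.mulVec, dotProduct, Aug_succ] using this

lemma exact_rel (P : Matrix (Fin n) (Fin (n+1)) R) (v : Fin (n+1) → R)
    (hv : ∑ i, v i * Dl P i = 0) (i) : ∃ y, Pᵀ *ᵥ y = Dl P i • v := by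
  set N := Aug (Pi.single i 1) P with hN
  have h : (v ᵥ* N.adjugate) ᵥ* N = Dl P i • v := by
    rw [Matrix.vecMul_vecMul, Matrix.adjugate_mul, hN, det_Aug_single]
    simp [Matrix.vecMul_smul]
  have h0 : (v ᵥ* N.adjugate) 0 = 0 := by
    simpa [Matrix.vecMul, dotProduct, hN, adj_Aug] using hv
  refine ⟨fun j => (v ᵥ* N.adjugate) j.succ, ?_⟩
  rw [← h, Matrix.mulVec_transpose]
  ext l
  conv_rhs => rw [Matrix.vecMul, dotProduct, Fin.sum_univ_succ, h0]
  simp [Matrix.vecMul, dotProduct, hN, Aug_succ]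

lemma transpose_inj [IsDomain R] (P : Matrix (Fin n) (Fin (n+1)) R) (i) (hi : Dl P i ≠ 0)
    (y : Fin n → R) (hy : Pᵀ *ᵥ y = 0) : y = 0 := by
  have h : (Fin.cons 0 y : Fin (n+1) → R) ᵥ* Aug (Pi.single i 1) P = 0 := by
    ext l
    rw [Matrix.vecMul, dotProduct, Fin.sum_univ_succ]
    have := congrFun hy l
    rw [Matrix.mulVec_transpose] at this
    simpa [Matrix.vecMul, dotProduct, Aug_succ] using this
  have := Matrix.eq_zero_of_vecMul_eq_zero (by rwa [det_Aug_single]) h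
  ext j
  simpa using congrFun this j.succ

lemma Dl_map {K : Type*} [CommRing K] (φ : R →+* K) (P : Matrix (Fin n) (Fin (n+1)) R) (i) :
    Dl (P.map φ) i = φ (Dl P i) := by
  simp only [Dl, map_mul, map_pow, map_neg, map_one, RingHom.map_det]
  rfl

lemma exists_Dl_ne {K : Type*} [Field K] (φ : R →+* K) (P : Matrix (Fin n) (Fin (n+1)) R)
    (a : R) (ha : ∀ z : Fin n → R, ∃ u, P *ᵥ u = a • z) (h : φ a ≠ 0) :
    ∃ i, φ (Dl P i) ≠ 0 := by
  choose X hX using fun j : Fin n => ha (Pi.single j 1)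
  have hli : LinearIndependent K (fun j => (P.map φ) j) := by
    rw [Fintype.linearIndependent_iff]
    intro c hc j
    have hc' : ∀ l, ∑ b, c b * φ (P b l) = 0 := fun l => by
      simpa using congrFun hc l
    have : ∑ l, (∑ b, c b * φ (P b l)) * φ (X j l) = c j * φ a := by
      simp only [Finset.sum_mul]
      rw [Finset.sum_comm]
      have : ∀ b, ∑ l, c b * φ (P b l) * φ (X j l) = c b * φ ((a • Pi.single j 1 : Fin n → R) b) := by
        intro b
        rw [← hX j]
        simp [Matrix.mulVec, dotProduct, Finset.mul_sum, mul_assoc]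
      simp only [this]
      rw [Finset.sum_eq_single j] <;> simp +contextual [Pi.single_apply]
    rw [Finset.sum_eq_zero (fun l _ => by rw [hc' l, zero_mul])] at this
    rcases mul_eq_zero.1 this.symm with h1 | h1
    · exact h1
    · exact absurd h1 h
  have hlt : Submodule.span K (Set.range fun j => (P.map φ) j) ≠ ⊤ := by
    intro htop
    have := finrank_range_le_card (R := K) (b := fun j => (P.map φ) j)
    rw [Set.finrank, htop, finrank_top] at this
    simp at this
  obtain ⟨r, hr⟩ : ∃ r, r ∉ Submodule.span K (Set.range fun j => (P.map φ) j) := by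
    by_contra hcon
    push Not at hcon
    exact hlt (by rw [eq_top_iff]; intro x _; exact hcon x)
  have hl2 : LinearIndependent K (Fin.cons r (fun j => (P.map φ) j) : Fin (n+1) → Fin (n+1) → K) :=
    linearIndependent_finCons.2 ⟨hli, hr⟩
  have hu : IsUnit (Aug r (P.map φ)) := Matrix.linearIndependent_rows_iff_isUnit.1 hl2
  rw [Matrix.isUnit_iff_isUnit_det, det_Aug] at hu
  by_contra hcon
  push Not at hcon
  apply hu.ne_zero
  exact Finset.sum_eq_zero fun i _ => by rw [Dl_map, hcon i, mul_zero]

lemma dvd_of_forall [IsDomain R] [UniqueFactorizationMonoid R] {ι : Type*} (D : ι → R)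
    (hD : ∀ p, Prime p → ∃ i, ¬ p ∣ D i) (c : R) (hc : c ≠ 0) :
    ∀ s, (∀ l, c ∣ D l * s) → c ∣ s := by
  induction c using UniqueFactorizationMonoid.induction_on_prime with
  | h₁ => exact absurd rfl hc
  | h₂ x hx => exact fun s _ => hx.dvd
  | h₃ c p hc0 hp ih =>
    intro s hs
    obtain ⟨l, hl⟩ := hD p hp
    have : p ∣ s := (hp.dvd_or_dvd ((dvd_mul_right p c).trans (hs l))).resolve_left hl
    obtain ⟨s', rfl⟩ := this
    refine mul_dvd_mul_left p (ih hc0 s' fun l => ?_)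
    have := hs l
    rw [mul_left_comm] at this
    exact (mul_dvd_mul_iff_left hp.ne_zero).1 this

lemma scalar [IsDomain R] [UniqueFactorizationMonoid R] {ι : Type*} (D : ι → R)
    (hD : ∀ p, Prime p → ∃ i, ¬ p ∣ D i) (i : ι) (hi : D i ≠ 0) (s : ι → R)
    (hs : ∀ i l, D l * s i = D i * s l) : ∃ c, ∀ l, s l = D l * c := by
  obtain ⟨c, hc⟩ := dvd_of_forall D hD (D i) hi (s i) fun l => ⟨s l, hs i l⟩
  refine ⟨c, fun l => ?_⟩
  apply mul_left_cancel₀ hi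
  rw [← hs i l, hc]; ring

section main
variable [IsDomain R] [UniqueFactorizationMonoid R] (P : Matrix (Fin n) (Fin (n+1)) R)
  (a₀ : R) (ha₀ : a₀ ≠ 0) (h₀ : ∀ z : Fin n → R, ∃ u, P *ᵥ u = a₀ • z)
  (hp : ∀ p : R, Prime p → ∃ a, (∀ z : Fin n → R, ∃ u, P *ᵥ u = a • z) ∧ ¬ p ∣ a)
include ha₀ h₀

lemma exists_ne : ∃ i, Dl P i ≠ 0 := by
  obtain ⟨i, hi⟩ := exists_Dl_ne (algebraMap R (FractionRing R)) P a₀ h₀ (by simpa using ha₀)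
  exact ⟨i, fun h => hi (by rw [h, map_zero])⟩

omit [UniqueFactorizationMonoid R] ha₀ h₀ [IsDomain R] in
include hp in
lemma exists_ndvd (p : R) (hpp : Prime p) : ∃ i, ¬ p ∣ Dl P i := by
  obtain ⟨a, ha, hpa⟩ := hp p hpp
  haveI : (Ideal.span {p}).IsPrime := (Ideal.span_singleton_prime hpp.ne_zero).2 hpp
  have key : ∀ x, (algebraMap (R ⧸ Ideal.span {p}) (FractionRing (R ⧸ Ideal.span {p}))).comp
      (Ideal.Quotient.mk _) x = 0 ↔ p ∣ x := by
    intro x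
    rw [RingHom.comp_apply, FaithfulSMul.algebraMap_eq_zero_iff, Ideal.Quotient.eq_zero_iff_mem,
      Ideal.mem_span_singleton]
  obtain ⟨i, hi⟩ := exists_Dl_ne _ P a ha (by rwa [Ne, key])
  exact ⟨i, by rwa [Ne, key] at hi⟩

include hp

lemma ker_eq (u : Fin (n+1) → R) (hu : P *ᵥ u = 0) : ∃ c : R, u = c • Dl P := by
  obtain ⟨i, hi⟩ := exists_ne P a₀ ha₀ h₀
  obtain ⟨c, hc⟩ := scalar (Dl P) (exists_ndvd P hp) i hi u (fun i l => ker_rel P u hu l i)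
  exact ⟨c, by ext l; simp [hc l, mul_comm]⟩

lemma exact (v : Fin (n+1) → R) (hv : ∑ i, v i * Dl P i = 0) : ∃ y, Pᵀ *ᵥ y = v := by
  obtain ⟨i, hi⟩ := exists_ne P a₀ ha₀ h₀
  choose Y hY using exact_rel P v hv
  have hrel : ∀ i l, Dl P l • Y i = Dl P i • Y l := by
    intro i l
    rw [← sub_eq_zero]
    refine transpose_inj P _ hi _ ?_
    rw [Matrix.mulVec_sub, Matrix.mulVec_smul, Matrix.mulVec_smul, hY, hY, smul_smul, smul_smul,
      mul_comm, sub_self]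
  choose y hy using fun j => scalar (Dl P) (exists_ndvd P hp) i hi (fun i => Y i j)
    (fun i l => congrFun (hrel i l) j)
  refine ⟨y, ?_⟩
  have : Y i = Dl P i • y := by ext j; exact hy j i
  have h2 := hY i
  rw [this, Matrix.mulVec_smul] at h2
  ext l
  exact mul_left_cancel₀ hi (congrFun h2 l)

lemma mem_span (a : R) (ha : ∀ z : Fin n → R, ∃ u, P *ᵥ u = a • z) :
    a ∈ Ideal.span (Set.range (Dl P)) := by
  obtain ⟨i, hi⟩ := exists_ne P a₀ ha₀ h₀
  choose X hX using fun j : Fin n => ha (Pi.single j 1)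
  -- homotopy
  have hXz : ∀ z : Fin n → R, P *ᵥ (∑ j, z j • X j) = a • z := by
    intro z
    rw [Matrix.mulVec_sum]
    simp only [Matrix.mulVec_smul, hX]
    ext b
    simp [Finset.sum_apply, Pi.single_apply, mul_comm]
  choose s hs using fun l : Fin (n+1) => ker_eq P a₀ ha₀ h₀ hp
    (a • Pi.single l 1 - ∑ j, (P *ᵥ Pi.single l 1) j • X j) (by
      rw [Matrix.mulVec_sub, hXz, Matrix.mulVec_smul, sub_self])
  have hD : ∑ l, Dl P l • (a • Pi.single l 1 - ∑ j, (P *ᵥ Pi.single l 1) j • X j)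
      = a • Dl P := by
    simp only [smul_sub, Finset.sum_sub_distrib, Finset.smul_sum]
    have h1 : ∑ l, Dl P l • a • (Pi.single l 1 : Fin (n+1) → R) = a • Dl P := by
      ext b; simp [Finset.sum_apply, Pi.single_apply, mul_comm]
    have h2 : ∑ l, ∑ j, Dl P l • (P *ᵥ Pi.single l 1) j • X j = 0 := by
      rw [Finset.sum_comm]
      refine Finset.sum_eq_zero fun j _ => ?_
      simp only [smul_smul]
      rw [← Finset.sum_smul]
      have := congrFun (mulVec_Dl P) j
      simp only [Matrix.mulVec, dotProduct, Pi.zero_apply] at this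
      rw [show ∑ l, Dl P l * (P *ᵥ Pi.single l 1) j = 0 from ?_, zero_smul]
      rw [← this]
      refine Finset.sum_congr rfl fun l _ => ?_
      simp [mul_comm]
    rw [h1, h2, sub_zero]
  simp only [hs] at hD
  have := congrFun hD i
  simp only [Finset.sum_apply, Pi.smul_apply, smul_eq_mul, ← mul_assoc] at this
  rw [← Finset.sum_mul] at this
  rw [← mul_right_cancel₀ hi this]
  exact Ideal.sum_mem _ fun l _ => Ideal.mul_mem_right _ _ (Ideal.subset_span ⟨l, rfl⟩)

end main

end HB

namespace HB
open Matrix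

lemma aux_dim (q : WithBot ℕ∞) (this : q + 1 + 1 ≤ 3) : q ≤ 1 := by
  induction q using WithBot.recBotCoe with
  | bot => simp
  | coe q =>
    have h : (q + 1 + 1 : ℕ∞) ≤ 1 + 1 + 1 := by
      have : ((q + 1 + 1 : ℕ∞) : WithBot ℕ∞) ≤ ((1 + 1 + 1 : ℕ∞) : WithBot ℕ∞) := by
        refine le_trans this (le_of_eq ?_)
        norm_num
      exact WithBot.coe_le_coe.1 this
    have h2 : q ≤ 1 := by
      induction q using WithTop.recTopCoe with
      | top => exact absurd h (by decide)
      | coe q =>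
        have h2 : ((q + 1 + 1 : ℕ) : ℕ∞) ≤ ((1 + 1 + 1 : ℕ) : ℕ∞) := by
          push_cast; exact h
        have h3 := Nat.cast_le.1 h2
        have h4 : ((q : ℕ) : ℕ∞) ≤ ((1 : ℕ) : ℕ∞) := Nat.cast_le.2 (by omega)
        exact h4
    exact_mod_cast h2

section koszul
variable {k : Type*} [Field k]

local notation "T" => MvPolynomial (Fin 3) k

lemma X_ndvd (i j : Fin 3) (hij : i ≠ j) : ¬ (X i : T) ∣ X j := by
  intro h
  rw [MvPolynomial.X_dvd_X] at h
  exact hij h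

lemma X_prime3 (i : Fin 3) : Prime (X i : T) := MvPolynomial.X_prime

/-- exactness of the Koszul complex on the three variables -/
lemma koszul_X (c01 c02 c12 : T) (h : X 2 * c01 - X 1 * c02 + X 0 * c12 = 0) :
    ∃ b0 b1 b2 : T, c01 = X 1 * b0 - X 0 * b1 ∧ c02 = X 2 * b0 - X 0 * b2 ∧
      c12 = X 2 * b1 - X 1 * b2 := by
  have h1 : X 1 * c02 ∈ Ideal.span ((X : Fin 3 → T) '' {0, 2}) := by
    have : X 1 * c02 = c01 * X 2 + c12 * X 0 := by linear_combination -h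
    rw [this]
    exact Ideal.add_mem _ (Ideal.mul_mem_left _ _ (Ideal.subset_span ⟨2, by simp, rfl⟩))
      (Ideal.mul_mem_left _ _ (Ideal.subset_span ⟨0, by simp, rfl⟩))
  have h2 : c02 ∈ Ideal.span ((X : Fin 3 → T) '' {0, 2}) := by
    rw [mem_ideal_span_X_image] at h1 ⊢
    intro m hm
    have hm' : m + Finsupp.single 1 1 ∈ (X 1 * c02).support := by
      rw [mem_support_iff] at hm ⊢
      rwa [mul_comm, coeff_mul_X]
    obtain ⟨i, hi, hne⟩ := h1 _ hm'
    refine ⟨i, hi, ?_⟩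
    have : i ≠ 1 := by
      rintro rfl
      simp at hi
    simpa [Finsupp.single_apply, this.symm] using hne
  rw [Set.image_pair, Ideal.mem_span_pair] at h2
  obtain ⟨s, t, hst⟩ := h2
  have h3 : X 2 * (c01 - X 1 * t) = X 0 * (X 1 * s - c12) := by
    rw [← hst] at h; linear_combination h
  have h4 : (X 2 : T) ∣ X 1 * s - c12 := by
    refine ((X_prime3 (k:=k) 2).dvd_or_dvd ⟨_, h3.symm⟩).resolve_left (X_ndvd 2 0 (by decide))
  obtain ⟨r, hr⟩ := h4
  have h5 : c01 - X 1 * t = X 0 * r := by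
    apply mul_left_cancel₀ (MvPolynomial.X_ne_zero (R := k) (2 : Fin 3))
    rw [h3, hr]; ring
  refine ⟨t, -r, -s, ?_, ?_, ?_⟩
  · linear_combination h5
  · linear_combination -hst
  · linear_combination -hr

lemma X_dvd_of (a b : T) (i j : Fin 3) (hij : i ≠ j) (h : X j * a = X i * b) :
    (X i : T) ∣ a :=
  ((X_prime3 (k:=k) i).dvd_or_dvd ⟨_, h⟩).resolve_left (X_ndvd i j hij)

/-- if `M = coker P` with `P` resolved by `Dl P`, then the socle is zero -/
lemma socle {n : ℕ} (P : Matrix (Fin n) (Fin (n+1)) T) (i₀) (hi₀ : Dl P i₀ ≠ 0)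
    (hker : ∀ u, P *ᵥ u = 0 → ∃ c : T, u = c • Dl P) (z : Fin n → T)
    (hz : ∀ i : Fin 3, ∃ u, P *ᵥ u = (X i : T) • z) : ∃ u, P *ᵥ u = z := by
  choose u hu using hz
  have hc : ∀ i j : Fin 3, ∃ c : T, (X j : T) • u i - (X i : T) • u j = c • Dl P := by
    intro i j
    apply hker
    rw [Matrix.mulVec_sub, Matrix.mulVec_smul, Matrix.mulVec_smul, hu, hu, smul_smul, smul_smul,
      mul_comm, sub_self]
  choose c hc using hc
  have hc' : ∀ i j l, X j * u i l - X i * u j l = c i j * Dl P l := fun i j l =>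
    congrFun (hc i j) l
  obtain ⟨b0, b1, b2, e01, e02, e12⟩ := koszul_X (c 0 1) (c 0 2) (c 1 2) (by
    apply mul_right_cancel₀ hi₀
    linear_combination -(X 2) * hc' 0 1 i₀ + X 1 * hc' 0 2 i₀ - X 0 * hc' 1 2 i₀)
  have r01 : ∀ l, X 1 * (u 0 l - b0 * Dl P l) = X 0 * (u 1 l - b1 * Dl P l) := fun l => by
    have := hc' 0 1 l
    rw [e01] at this; linear_combination this
  have hd : ∀ l, (X 0 : T) ∣ u 0 l - b0 * Dl P l := fun l =>
    X_dvd_of _ _ 0 1 (by decide) (r01 l)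
  choose w hw using hd
  refine ⟨w, ?_⟩
  have h0 : (X 0 : T) • w = u 0 - b0 • Dl P := by
    ext1 l; simp [hw]
  have h1 : P *ᵥ ((X 0 : T) • w) = (X 0 : T) • z := by
    rw [h0, Matrix.mulVec_sub, Matrix.mulVec_smul, mulVec_Dl, hu, smul_zero, sub_zero]
  rw [Matrix.mulVec_smul] at h1
  ext1 l
  exact mul_left_cancel₀ (MvPolynomial.X_ne_zero (R := k) (0 : Fin 3)) (congrFun h1 l)

/-- the depth statement and dimension statement -/
lemma cm_dim (L : Ideal T) (hsoc : ∀ a : T, (∀ i, X i * a ∈ L) → a ∈ L)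
    (hL : L ≤ Ideal.span (Set.range (X : Fin 3 → T))) (f y : T) (hf : f ≠ 0)
    (hfp : Prime f) (hfL : f ∈ L) (hyL : y ∈ L) (hfy : ¬ f ∣ y) :
    ringKrullDim (T ⧸ L) = 1 ∧ (∃ t ∈ Ideal.span (Set.range (X : Fin 3 → T)),
        Ideal.Quotient.mk L t ∈ nonZeroDivisors (T ⧸ L)) := by
  set m : Ideal T := Ideal.span (Set.range (X : Fin 3 → T)) with hm
  have hm1 : (1 : T) ∉ m := by
    intro h
    rw [hm, ← Set.image_univ, mem_ideal_span_X_image] at h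
    obtain ⟨i, _, hi⟩ := h 0 (by simp)
    simp at hi
  have hmax : ∀ I : Ideal T, I ≠ ⊤ → m ≤ I → I = m := by
    intro I hI hmI
    refine le_antisymm ?_ hmI
    intro p hp
    have hp' : p - C (coeff 0 p) ∈ m := by
      rw [hm, ← Set.image_univ, mem_ideal_span_X_image]
      intro e he
      by_contra hcon
      push Not at hcon
      have : e = 0 := by ext i; simpa using hcon i
      subst this
      simp [mem_support_iff] at he
    by_cases h0 : coeff 0 p = 0
    · simpa [h0] using hp'
    · exfalso
      apply hI
      refine Ideal.eq_top_of_isUnit_mem I (x := C (coeff 0 p)) ?_ ((Ne.isUnit h0).map C)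
      have := I.sub_mem hp (hmI hp')
      simpa using this
  have hLt : L ≠ ⊤ := fun h => hm1 (hL (h ▸ Submodule.mem_top))
  haveI : Nontrivial (T ⧸ L) := Ideal.Quotient.nontrivial_iff.2 hLt
  have hcm : ∃ t ∈ m, Ideal.Quotient.mk L t ∈ nonZeroDivisors (T ⧸ L) := by
    by_contra hcon
    push Not at hcon
    have hsub : ((m.map (Ideal.Quotient.mk L) : Ideal (T ⧸ L)) : Set (T ⧸ L)) ⊆
        ⋃ p ∈ associatedPrimes (T ⧸ L) (T ⧸ L), (p : Set (T ⧸ L)) := by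
      rw [biUnion_associatedPrimes_eq_compl_nonZeroDivisors]
      intro q hq
      obtain ⟨t, ht, rfl⟩ := (Ideal.mem_map_iff_of_surjective _ Ideal.Quotient.mk_surjective).1 hq
      exact hcon t ht
    rw [Ideal.subset_union_prime_finite (associatedPrimes.finite (T ⧸ L) (T ⧸ L)) 0 0
      (fun p hp _ _ => hp.isPrime)] at hsub
    obtain ⟨p, hp, hmp⟩ := hsub
    obtain ⟨hpp, x, hx⟩ := isAssociatedPrime_iff.1 hp
    obtain ⟨a, rfl⟩ := Ideal.Quotient.mk_surjective x
    have haL : a ∈ L := by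
      apply hsoc
      intro i
      have h1 : Ideal.Quotient.mk L (X i) ∈ p :=
        hmp (Ideal.mem_map_of_mem _ (Ideal.subset_span ⟨i, rfl⟩))
      rw [hx, Submodule.mem_colon_singleton, smul_eq_mul, ← map_mul, Submodule.mem_bot,
        Ideal.Quotient.eq_zero_iff_mem] at h1
      exact h1
    apply hpp.ne_top
    rw [hx, Ideal.eq_top_iff_one, Submodule.mem_colon_singleton, one_smul, Submodule.mem_bot,
      Ideal.Quotient.eq_zero_iff_mem]
    exact haL
  refine ⟨le_antisymm ?_ ?_, hcm⟩
  · have d3 : ringKrullDim T = 3 := by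
      rw [MvPolynomial.ringKrullDim_of_isNoetherianRing]; simp
    haveI : (Ideal.span {f}).IsPrime := (Ideal.span_singleton_prime hf).2 hfp
    have s1 : ringKrullDim (T ⧸ Ideal.span {f}) + 1 ≤ ringKrullDim T :=
      ringKrullDim_quotient_succ_le_of_nonZeroDivisor (mem_nonZeroDivisors_of_ne_zero hf)
    set y' := Ideal.Quotient.mk (Ideal.span {f}) y with hy'
    have s2 : ringKrullDim ((T ⧸ Ideal.span {f}) ⧸ Ideal.span {y'}) + 1 ≤
        ringKrullDim (T ⧸ Ideal.span {f}) :=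
      ringKrullDim_quotient_succ_le_of_nonZeroDivisor (mem_nonZeroDivisors_of_ne_zero (by
        rw [hy', Ne, Ideal.Quotient.eq_zero_iff_mem, Ideal.mem_span_singleton]; exact hfy))
    have hfL' : ∀ a ∈ Ideal.span {f}, Ideal.Quotient.mk L a = 0 := by
      intro a ha
      rw [Ideal.Quotient.eq_zero_iff_mem]
      exact (Ideal.span_singleton_le_iff_mem _).2 hfL ha
    let φ := Ideal.Quotient.lift (Ideal.span {f}) (Ideal.Quotient.mk L) hfL'
    have s3 : ringKrullDim (T ⧸ L) ≤ ringKrullDim ((T ⧸ Ideal.span {f}) ⧸ Ideal.span {y'}) := by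
      refine ringKrullDim_le_of_surjective (Ideal.Quotient.lift (Ideal.span {y'}) φ ?_) ?_
      · intro a ha
        obtain ⟨b, rfl⟩ := Ideal.mem_span_singleton.1 ha
        rw [map_mul, hy']
        have : φ (Ideal.Quotient.mk (Ideal.span {f}) y) = 0 := by
          simp only [φ, Ideal.Quotient.lift_mk]
          exact Ideal.Quotient.eq_zero_iff_mem.2 hyL
        rw [this, zero_mul]
      · intro q
        obtain ⟨a, rfl⟩ := Ideal.Quotient.mk_surjective q
        exact ⟨Ideal.Quotient.mk _ (Ideal.Quotient.mk _ a), by simp [φ]⟩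
    rw [d3] at s1
    have : ringKrullDim (T ⧸ L) + 1 + 1 ≤ 3 := by
      refine le_trans ?_ s1
      gcongr
      refine le_trans ?_ s2
      gcongr
    exact aux_dim _ this
  · obtain ⟨t, ht, htn⟩ := hcm
    have s1 := ringKrullDim_quotient_succ_le_of_nonZeroDivisor htn
    haveI : Nontrivial ((T ⧸ L) ⧸ Ideal.span {Ideal.Quotient.mk L t}) := by
      rw [Ideal.Quotient.nontrivial_iff]
      intro h
      have h1 : (1 : T ⧸ L) ∈ Ideal.span {Ideal.Quotient.mk L t} := h ▸ Submodule.mem_top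
      obtain ⟨b, hb⟩ := Ideal.mem_span_singleton.1 h1
      obtain ⟨b, rfl⟩ := Ideal.Quotient.mk_surjective b
      rw [← map_mul, ← map_one (Ideal.Quotient.mk L), Ideal.Quotient.eq] at hb
      apply hm1
      have := m.add_mem (hL hb) (m.mul_mem_right b ht)
      simpa using this
    refine le_trans ?_ s1
    calc (1 : WithBot ℕ∞) = 0 + 1 := by simp
      _ ≤ _ := by gcongr; exact ringKrullDim_nonneg_of_nontrivial

end koszul
end HB

namespace HB

section radical
variable {k : Type*} [Field k]
attribute [local instance] MvPolynomial.gradedAlgebra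

lemma X_mem_radical (d : ℕ) (g : Fin 3 → MvPolynomial (Fin 2) k) (hg : ∀ i, (g i).IsHomogeneous d)
    (hht : idealHeight (Ideal.span (Set.range g)) = 2) (i : Fin 2) :
    X i ∈ (Ideal.span (Set.range g)).radical := by
  rw [Ideal.radical_eq_sInf, Submodule.mem_sInf]
  rintro P' ⟨hgP', hP'⟩
  obtain ⟨P, rfl⟩ : ∃ P : Ideal (MvPolynomial (Fin 2) k), P = P' := ⟨P', rfl⟩
  have hP : P.IsPrime := hP'
  have hgP : Ideal.span (Set.range g) ≤ P := hgP'
  set Q := (P.homogeneousCore (homogeneousSubmodule (Fin 2) k)).toIdeal with hQ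
  have hQP : Q ≤ P := Ideal.toIdeal_homogeneousCore_le _ P
  have hQh : Q.IsHomogeneous (homogeneousSubmodule (Fin 2) k) :=
    (P.homogeneousCore (homogeneousSubmodule (Fin 2) k)).isHomogeneous
  have hQp : Q.IsPrime := Ideal.IsPrime.homogeneousCore hP
  have hgQ : Ideal.span (Set.range g) ≤ Q := by
    rw [Ideal.span_le]
    rintro _ ⟨j, rfl⟩
    refine Ideal.mem_homogeneousCore_of_homogeneous_of_mem ⟨d, hg j⟩ (hgP (Ideal.subset_span ⟨j, rfl⟩))
  have hdim : ringKrullDim (MvPolynomial (Fin 2) k) = 2 := by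
    rw [MvPolynomial.ringKrullDim_of_isNoetherianRing]; simp
  have hQm : Q.IsMaximal := by
    obtain ⟨M, hM, hQM⟩ := Ideal.exists_le_maximal Q hQp.ne_top
    rcases eq_or_lt_of_le hQM with h | h
    · rwa [h]
    exfalso
    let q : PrimeSpectrum (MvPolynomial (Fin 2) k) := ⟨Q, hQp⟩
    let m : PrimeSpectrum (MvPolynomial (Fin 2) k) := ⟨M, hM.isPrime⟩
    have hqm : q < m := h
    have h2 : 2 ≤ Order.height q := by
      rw [← hht]
      exact iInf₂_le q hgQ
    have h3 : Order.height q + 1 ≤ Order.height m := Order.height_add_one_le hqm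
    have h4 : (Order.height m : WithBot ℕ∞) ≤ 2 := by
      rw [← hdim]; exact Order.height_le_krullDim m
    have h5 : Order.height m ≤ 2 := WithBot.coe_le_coe.1 h4
    have h6 : (2 : ℕ∞) + 1 ≤ 2 := le_trans (by gcongr) (h3.trans h5)
    exact absurd h6 (by decide)
  by_contra hX
  have hXQ : X i ∉ Q := fun h => hX (hQP h)
  obtain ⟨r, q, hq, h1⟩ := hQm.exists_inv hXQ
  have hq0 := homogeneousComponent_mem_of_mem hQh hq 0
  apply hQp.ne_top
  rw [Ideal.eq_top_iff_one]
  have : homogeneousComponent 0 q = 1 := by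
    have h2 : q = 1 - r * X i := by linear_combination h1
    rw [homogeneousComponent_zero, h2, ← constantCoeff_eq]
    simp
  rwa [this] at hq0

end radical

section dims
variable {k : Type*} [Field k]

lemma hcomp_mul {σ : Type*} {d : ℕ} (h : MvPolynomial σ k) (H : h.IsHomogeneous d) (m : ℕ)
    (w : MvPolynomial σ k) :
    homogeneousComponent (m + d) (h * w) = h * homogeneousComponent m w := by
  conv_lhs => rw [← sum_homogeneousComponent w, Finset.mul_sum, map_sum]
  have key : ∀ i, homogeneousComponent (m + d) (h * homogeneousComponent i w) =
      if i = m then h * homogeneousComponent m w else 0 := by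
    intro i
    have hi : h * homogeneousComponent i w ∈ homogeneousSubmodule σ k (i + d) := by
      rw [add_comm]
      exact H.mul (homogeneousComponent_isHomogeneous i w)
    rw [homogeneousComponent_of_mem hi]
    by_cases him : i = m
    · subst him; simp
    · rw [if_neg him, if_neg (by omega)]
  simp only [key]
  rw [Finset.sum_ite_eq']
  split_ifs with hm
  · rfl
  · rw [homogeneousComponent_eq_zero, mul_zero]
    simpa using hm

lemma hcomp_mul_not_dvd {σ : Type*} {d e : ℕ} (h : MvPolynomial σ k) (H : h.IsHomogeneous d)
    (w : MvPolynomial σ k) (he : e < d) :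
    homogeneousComponent e (h * w) = 0 := by
  conv_lhs => rw [← sum_homogeneousComponent w, Finset.mul_sum, map_sum]
  refine Finset.sum_eq_zero fun i _ => ?_
  have hi : h * homogeneousComponent i w ∈ homogeneousSubmodule σ k (d + i) :=
      H.mul (homogeneousComponent_isHomogeneous i w)
  rw [homogeneousComponent_of_mem hi, if_neg (by omega)]

instance finite_hom (e : ℕ) : Module.Finite k (homogeneousSubmodule (Fin 2) k e) :=
  Module.Finite.iff_fg.2 (homogeneousSubmodule_fg (σ := Fin 2) (R := k) e)

lemma finrank_hom (e : ℕ) : Module.finrank k (homogeneousSubmodule (Fin 2) k e) = e + 1 := by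
  let v : Fin (e+1) → MvPolynomial (Fin 2) k := fun i => X 0 ^ (i:ℕ) * X 1 ^ (e - i)
  let ex : Fin (e+1) → (Fin 2 →₀ ℕ) := fun i =>
    Finsupp.single 0 (i:ℕ) + Finsupp.single 1 (e - i)
  have hv : ∀ i, v i = monomial (ex i) 1 := by
    intro i
    simp [v, ex, X_pow_eq_monomial, monomial_mul]
  have hex : Function.Injective ex := by
    intro i j hij
    have := DFunLike.congr_fun hij 0
    simp [ex] at this
    exact Fin.ext this
  have hli : LinearIndependent k v := by
    have := (basisMonomials (Fin 2) k).linearIndependent.comp ex hex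
    have h2 : v = (basisMonomials (Fin 2) k) ∘ ex := by
      ext1 i
      simp [hv]
    rw [h2]; exact this
  have hspan : Submodule.span k (Set.range v) = homogeneousSubmodule (Fin 2) k e := by
    apply le_antisymm
    · rw [Submodule.span_le]
      rintro _ ⟨i, rfl⟩
      have := (isHomogeneous_X_pow (R := k) (0 : Fin 2) i).mul (isHomogeneous_X_pow (R := k) (1 : Fin 2) (e-i))
      rw [SetLike.mem_coe, mem_homogeneousSubmodule]
      convert this using 1
      have := i.2
      omega
    · intro p hp
      rw [mem_homogeneousSubmodule] at hp
      rw [p.as_sum]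
      refine Submodule.sum_mem _ fun m hm => ?_
      have hdeg := hp.degree_eq_sum_deg_support hm
      rw [← mul_one (coeff m p), ← smul_eq_mul, ← smul_monomial]
      refine Submodule.smul_mem _ _ (Submodule.subset_span ?_)
      have hsum : m 0 + m 1 = e := by
        have := hp (mem_support_iff.1 hm)
        simpa [Finsupp.weight_apply, Finsupp.sum_fintype, Fin.sum_univ_two] using this
      refine ⟨⟨m 0, by omega⟩, ?_⟩
      rw [hv]
      refine congrArg (fun q => monomial q (1 : k)) ?_
      ext j
      fin_cases j <;> simp [ex]; omega
  rw [← hspan, finrank_span_eq_card hli]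
  simp

/-- in degree `c+2d`, two coprime forms of degree `d` generate everything -/
lemma two_gen (d c : ℕ) (h1 h2 : MvPolynomial (Fin 2) k) (H1 : h1.IsHomogeneous d)
    (H2 : h2.IsHomogeneous d) (h10 : h1 ≠ 0) (hrel : IsRelPrime h1 h2)
    (f : MvPolynomial (Fin 2) k) (hf : f.IsHomogeneous (c + d + d)) :
    ∃ a b : MvPolynomial (Fin 2) k, a.IsHomogeneous (c + d) ∧ b.IsHomogeneous (c + d) ∧
      f = h1 * a + h2 * b := by
  let H := homogeneousSubmodule (Fin 2) k
  let μ : ∀ (h : MvPolynomial (Fin 2) k) (hh : h.IsHomogeneous d) (e : ℕ), H e →ₗ[k] H (e + d) :=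
    fun h hh e => ((LinearMap.mulLeft k h).restrict (p := H e) (q := H (e+d)) (by
      intro x hx
      have := hh.mul ((mem_homogeneousSubmodule _ _).1 hx)
      rw [add_comm] at this
      exact this))
  let Φ : (H (c+d) × H (c+d)) →ₗ[k] H (c+d+d) := (μ h1 H1 _).coprod (μ h2 H2 _)
  let j : H c →ₗ[k] (H (c+d) × H (c+d)) := (μ h2 H2 c).prod (-(μ h1 H1 c))
  have hker : LinearMap.ker Φ ≤ LinearMap.range j := by
    rintro ⟨⟨a, ha⟩, ⟨b, hb⟩⟩ hab
    have hab' : h1 * a + h2 * b = 0 := by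
      exact congrArg Subtype.val (LinearMap.mem_ker.1 hab)
    have hd : h1 ∣ b := by
      have : h1 ∣ h2 * b := ⟨-a, by linear_combination hab'⟩
      exact hrel.dvd_of_dvd_mul_left this
    obtain ⟨w, rfl⟩ := hd
    have haw : a = - (h2 * w) := by
      apply mul_left_cancel₀ h10
      linear_combination hab'
    have hw : (homogeneousComponent c w).IsHomogeneous c := homogeneousComponent_isHomogeneous _ _
    refine ⟨-⟨homogeneousComponent c w, hw⟩, ?_⟩
    have e1 : h1 * homogeneousComponent c w = h1 * w := by
      rw [← hcomp_mul _ H1, homogeneousComponent_eq_self hb]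
    have hww : homogeneousComponent c w = w := mul_left_cancel₀ h10 e1
    refine Prod.ext (Subtype.ext ?_) (Subtype.ext ?_)
    · change h2 * (-(homogeneousComponent c w)) = a
      rw [hww, haw]; ring
    · change -(h1 * (-(homogeneousComponent c w))) = h1 * w
      rw [hww]; ring
  have hrk := LinearMap.finrank_range_add_finrank_ker Φ
  have hk : Module.finrank k (LinearMap.ker Φ) ≤ c + 1 := by
    refine (Submodule.finrank_mono hker).trans ((LinearMap.finrank_range_le j).trans ?_)
    rw [finrank_hom]
  rw [Module.finrank_prod, finrank_hom] at hrk
  have htop : LinearMap.range Φ = ⊤ := by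
    apply Submodule.eq_top_of_finrank_eq
    apply le_antisymm (Submodule.finrank_le _)
    rw [finrank_hom]; omega
  obtain ⟨⟨⟨a, ha⟩, ⟨b, hb⟩⟩, hab⟩ := LinearMap.range_eq_top.1 htop ⟨f, hf⟩
  refine ⟨a, b, ha, hb, ?_⟩
  exact (congrArg Subtype.val hab).symm
end dims
end HB

namespace HB

section infinite
variable {K : Type*} [Field K]

lemma exists_coprime [Infinite K] (g : Fin 3 → MvPolynomial (Fin 2) K)
    (hp : ∀ p, Prime p → ∃ i, ¬ p ∣ g i) (hnu : ∀ i, ¬ IsUnit (g i)) :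
    ∃ a b : K, g 0 + C a * g 2 ≠ 0 ∧ IsRelPrime (g 0 + C a * g 2) (g 1 + C b * g 2) := by
  obtain ⟨a, ha⟩ : ∃ a : K, g 0 + C a * g 2 ≠ 0 := by
    by_cases h0 : g 0 = 0
    · by_cases h2 : g 2 = 0
      · exfalso
        have hall : ∀ p, Prime p → p ∣ g 1 → False := by
          intro p hpp hp1
          obtain ⟨i, hi⟩ := hp p hpp
          fin_cases i
          · exact hi (by simp [h0])
          · exact hi hp1
          · exact hi (by simp [h2])
        by_cases h1 : g 1 = 0
        · exact hall (X 0) MvPolynomial.X_prime (by simp [h1])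
        · obtain ⟨p, hp1, hp2⟩ := WfDvdMonoid.exists_irreducible_factor (hnu 1) h1
          exact hall p hp1.prime hp2
      · exact ⟨1, by simpa [h0] using h2⟩
    · exact ⟨0, by simpa using h0⟩
  classical
  set F := (UniqueFactorizationMonoid.factors (g 0 + C a * g 2)).toFinset with hF
  have hbad : (⋃ p ∈ (F : Set (MvPolynomial (Fin 2) K)), {b : K | p ∣ g 1 + C b * g 2}).Finite := by
    refine Set.Finite.biUnion F.finite_toSet fun p hpF => ?_
    have hpF' := Multiset.mem_toFinset.1 (Finset.mem_coe.1 hpF)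
    have hpp : Prime p := UniqueFactorizationMonoid.prime_of_factor p hpF'
    have hpd : p ∣ g 0 + C a * g 2 := UniqueFactorizationMonoid.dvd_of_mem_factors hpF'
    refine Set.Subsingleton.finite ?_
    intro b1 h1 b2 h2
    by_contra hne
    have h3 : p ∣ C (b1 - b2) * g 2 := by
      have := dvd_sub h1 h2
      have e : g 1 + C b1 * g 2 - (g 1 + C b2 * g 2) = C (b1 - b2) * g 2 := by
        rw [C_sub]; ring
      rwa [e] at this
    have hu : IsUnit (C (b1 - b2) : MvPolynomial (Fin 2) K) :=
      (Ne.isUnit (sub_ne_zero.2 hne)).map C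
    have hg2 : p ∣ g 2 := (hu.dvd_mul_left).1 h3
    have hg1 : p ∣ g 1 := (dvd_add_left (dvd_mul_of_dvd_right hg2 _)).1 h1
    have hg0 : p ∣ g 0 := (dvd_add_left (dvd_mul_of_dvd_right hg2 _)).1 hpd
    obtain ⟨i, hi⟩ := hp p hpp
    fin_cases i
    · exact hi hg0
    · exact hi hg1
    · exact hi hg2
  obtain ⟨b, hb⟩ := hbad.exists_notMem
  refine ⟨a, b, ha, WfDvdMonoid.isRelPrime_of_no_irreducible_factors (fun h => ha h.1) ?_⟩
  intro z hz hz1 hz2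
  obtain ⟨q, hq, hqz⟩ := UniqueFactorizationMonoid.exists_mem_factors_of_dvd ha hz hz1
  apply hb
  simp only [Set.mem_iUnion]
  exact ⟨q, by simpa [hF] using hq, hqz.dvd_iff_dvd_left.1 hz2⟩

variable [Infinite K] (d : ℕ) (g : Fin 3 → MvPolynomial (Fin 2) K) (hg : ∀ i, (g i).IsHomogeneous d)
  (hp : ∀ p, Prime p → ∃ i, ¬ p ∣ g i) (hnu : ∀ i, ¬ IsUnit (g i))
include hg hp hnu

lemma S1_inf (c : ℕ) (f : MvPolynomial (Fin 2) K) (hf : f.IsHomogeneous (c + d + d)) :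
    ∃ w : Fin 3 → MvPolynomial (Fin 2) K, (∀ i, (w i).IsHomogeneous (c + d)) ∧
      f = ∑ i, g i * w i := by
  obtain ⟨a, b, h0, hrel⟩ := exists_coprime g hp hnu
  obtain ⟨w1, w2, H1, H2, e⟩ := two_gen d c _ _ ((hg 0).add ((hg 2).C_mul a))
    ((hg 1).add ((hg 2).C_mul b)) h0 hrel f hf
  refine ⟨![w1, w2, C a * w1 + C b * w2], ?_, ?_⟩
  · intro i
    fin_cases i
    · exact H1
    · exact H2
    · exact (H1.C_mul a).add (H2.C_mul b)
  · rw [e, Fin.sum_univ_three]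
    simp only [Matrix.cons_val]
    ring

lemma S2_inf (c : ℕ) (u : Fin 3 → MvPolynomial (Fin 2) K) (hu : ∀ i, (u i).IsHomogeneous (c + d + d))
    (h : ∑ i, g i * u i = 0) :
    ∃ w : Fin 3 → MvPolynomial (Fin 2) K, (∀ i, (w i).IsHomogeneous (c + d)) ∧
      u 0 = g 1 * w 2 - g 2 * w 1 ∧ u 1 = g 2 * w 0 - g 0 * w 2 ∧ u 2 = g 0 * w 1 - g 1 * w 0 := by
  obtain ⟨a, b, h0, hrel⟩ := exists_coprime g hp hnu
  have Hh1 := (hg 0).add ((hg 2).C_mul a)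
  obtain ⟨w1, w2, H1, H2, e⟩ := two_gen d c _ _ Hh1
    ((hg 1).add ((hg 2).C_mul b)) h0 hrel (u 2 - C a * u 0 - C b * u 1)
    (((hu 2).sub ((hu 0).C_mul a)).sub ((hu 1).C_mul b))
  rw [Fin.sum_univ_three] at h
  set h1 := g 0 + C a * g 2 with hh1
  set h2 := g 1 + C b * g 2 with hh2
  have hsum : h1 * (u 0 + g 2 * w1) + h2 * (u 1 + g 2 * w2) = 0 := by
    linear_combination h - g 2 * e
  have hd : h1 ∣ u 1 + g 2 * w2 := by
    refine hrel.dvd_of_dvd_mul_left ⟨-(u 0 + g 2 * w1), ?_⟩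
    linear_combination hsum
  obtain ⟨w3, e3⟩ := hd
  have e4 : u 0 + g 2 * w1 = - (h2 * w3) := by
    apply mul_left_cancel₀ h0
    rw [e3] at hsum; linear_combination hsum
  have H3 : w3.IsHomogeneous (c + d) := by
    have : (h1 * w3).IsHomogeneous (c + d + d) := by
      rw [← e3]
      refine (hu 1).add ?_
      have := (hg 2).mul H2
      rwa [add_comm] at this
    have h5 := hcomp_mul h1 Hh1 (c + d) w3
    rw [homogeneousComponent_eq_self this] at h5
    rw [mul_left_cancel₀ h0 h5]
    exact homogeneousComponent_isHomogeneous _ _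
  -- u0 = -h2 w3 - g2 w1 , u1 = h1 w3 - g2 w2
  refine ⟨![-w2 + C a * w3, w1 + C b * w3, -w3], ?_, ?_, ?_, ?_⟩
  · intro i
    fin_cases i
    · exact H2.neg.add (H3.C_mul a)
    · exact H1.add (H3.C_mul b)
    · exact H3.neg
  · simp only [Matrix.cons_val]
    linear_combination e4
  · simp only [Matrix.cons_val]
    linear_combination e3
  · simp only [Matrix.cons_val]
    linear_combination e + C a * e4 + C b * e3

end infinite

section descent
variable {k K : Type*} [Field k] [Field K] [Algebra k K]

/-- coefficientwise application of an additive map -/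
noncomputable def Pr {σ : Type*} (π : K →ₗ[k] k) (p : MvPolynomial σ K) : MvPolynomial σ k :=
  ∑ m ∈ p.support, monomial m (π (coeff m p))

lemma coeff_Pr {σ : Type*} (π : K →ₗ[k] k) (p : MvPolynomial σ K) (m) :
    coeff m (Pr π p) = π (coeff m p) := by
  classical
  rw [Pr, coeff_sum]
  simp only [coeff_monomial]
  rw [Finset.sum_ite_eq']
  split_ifs with h
  · rfl
  · rw [notMem_support_iff.1 h, map_zero]

lemma Pr_add {σ : Type*} (π : K →ₗ[k] k) (p q : MvPolynomial σ K) :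
    Pr π (p + q) = Pr π p + Pr π q := by
  ext m; simp [coeff_Pr]

lemma Pr_sub {σ : Type*} (π : K →ₗ[k] k) (p q : MvPolynomial σ K) :
    Pr π (p - q) = Pr π p - Pr π q := by
  ext m; simp [coeff_Pr]

lemma Pr_mul {σ : Type*} (π : K →ₗ[k] k) (p : MvPolynomial σ k) (q : MvPolynomial σ K) :
    Pr π (map (algebraMap k K) p * q) = p * Pr π q := by
  classical
  ext m
  simp only [coeff_Pr, coeff_mul, map_sum, coeff_map, ← Algebra.smul_def, map_smul, smul_eq_mul]

lemma Pr_map {σ : Type*} (π : K →ₗ[k] k) (hπ : π 1 = 1) (p : MvPolynomial σ k) :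
    Pr π (map (algebraMap k K) p) = p := by
  ext m
  rw [coeff_Pr, coeff_map, Algebra.algebraMap_eq_smul_one, map_smul, hπ, smul_eq_mul, mul_one]

lemma Pr_hom {σ : Type*} (π : K →ₗ[k] k) (p : MvPolynomial σ K) (n : ℕ) (hp : p.IsHomogeneous n) :
    (Pr π p).IsHomogeneous n := by
  intro m hm
  apply hp
  intro h
  rw [coeff_Pr, h, map_zero] at hm
  exact hm rfl

lemma exists_retr : ∃ π : K →ₗ[k] k, π 1 = 1 := by
  obtain ⟨π, hπ⟩ := (Algebra.linearMap k K).exists_leftInverse_of_injective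
    (LinearMap.ker_eq_bot.2 (algebraMap k K).injective)
  exact ⟨π, by simpa using LinearMap.congr_fun hπ 1⟩

end descent

section general
variable {k : Type*} [Field k] (d : ℕ) (hd : 0 < d) (g : Fin 3 → MvPolynomial (Fin 2) k)
  (hg : ∀ i, (g i).IsHomogeneous d) (hrad : ∀ i, X i ∈ (Ideal.span (Set.range g)).radical)

include hd hg hrad in
lemma base_change (K : Type*) [Field K] [Algebra k K] :
    (∀ p : MvPolynomial (Fin 2) K, Prime p → ∃ i, ¬ p ∣ map (algebraMap k K) (g i)) ∧
    (∀ i, ¬ IsUnit (map (algebraMap k K) (g i))) ∧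
    (∀ i, (map (algebraMap k K) (g i)).IsHomogeneous d) := by
  refine ⟨?_, ?_, fun i => (hg i).map _⟩
  · intro p hp
    by_contra hcon
    push Not at hcon
    have hX : ∀ i : Fin 2, p ∣ X i := by
      intro i
      obtain ⟨N, hN⟩ := hrad i
      have h1 : Ideal.span (Set.range g) ≤ (Ideal.span {p}).comap (map (algebraMap k K)) := by
        rw [Ideal.span_le]
        rintro _ ⟨j, rfl⟩
        exact Ideal.mem_span_singleton.2 (hcon j)
      have h2 := Ideal.mem_span_singleton.1 (Ideal.mem_comap.1 (h1 hN))
      rw [map_pow, map_X] at h2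
      exact hp.dvd_of_dvd_pow h2
    have h3 : Associated p (X 0) :=
      (hp.irreducible.associated_of_dvd (MvPolynomial.X_prime).irreducible (hX 0))
    have h4 := h3.dvd_iff_dvd_left.1 (hX 1)
    rw [X_dvd_X] at h4
    exact absurd h4 (by decide)
  · intro i hu
    have h1 : (map (algebraMap k K) (g i)).IsHomogeneous d := (hg i).map _
    obtain ⟨w, hw⟩ := hu.exists_right_inv
    have h2 := hcomp_mul_not_dvd _ h1 w hd
    rw [hw, homogeneousComponent_zero] at h2
    simp at h2

include hd hg hrad

lemma S1 (c : ℕ) (f : MvPolynomial (Fin 2) k) (hf : f.IsHomogeneous (c + d + d)) :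
    ∃ w : Fin 3 → MvPolynomial (Fin 2) k, (∀ i, (w i).IsHomogeneous (c + d)) ∧
      f = ∑ i, g i * w i := by
  obtain ⟨hp, hnu, hh⟩ := base_change d hd g hg hrad (AlgebraicClosure k)
  obtain ⟨π, hπ⟩ := exists_retr (k := k) (K := AlgebraicClosure k)
  have : Infinite (AlgebraicClosure k) := IsAlgClosed.instInfinite
  obtain ⟨w, hw, e⟩ := S1_inf d _ hh hp hnu c (map (algebraMap k _) f) (hf.map _)
  refine ⟨fun i => Pr π (w i), fun i => Pr_hom _ _ _ (hw i), ?_⟩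
  have e2 := congrArg (Pr π) e
  rw [Pr_map π hπ, Fin.sum_univ_three, Pr_add, Pr_add, Pr_mul, Pr_mul, Pr_mul] at e2
  rw [e2, Fin.sum_univ_three]

lemma S2 (c : ℕ) (u : Fin 3 → MvPolynomial (Fin 2) k) (hu : ∀ i, (u i).IsHomogeneous (c + d + d))
    (h : ∑ i, g i * u i = 0) :
    ∃ w : Fin 3 → MvPolynomial (Fin 2) k, (∀ i, (w i).IsHomogeneous (c + d)) ∧
      u 0 = g 1 * w 2 - g 2 * w 1 ∧ u 1 = g 2 * w 0 - g 0 * w 2 ∧ u 2 = g 0 * w 1 - g 1 * w 0 := by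
  obtain ⟨hp, hnu, hh⟩ := base_change d hd g hg hrad (AlgebraicClosure k)
  obtain ⟨π, hπ⟩ := exists_retr (k := k) (K := AlgebraicClosure k)
  have : Infinite (AlgebraicClosure k) := IsAlgClosed.instInfinite
  obtain ⟨w, hw, e0, e1, e2⟩ := S2_inf d _ hh hp hnu c (fun i => map (algebraMap k _) (u i))
    (fun i => (hu i).map _) (by
      have := congrArg (map (algebraMap k (AlgebraicClosure k))) h
      simpa only [map_sum, map_mul, map_zero] using this)
  refine ⟨fun i => Pr π (w i), fun i => Pr_hom _ _ _ (hw i), ?_, ?_, ?_⟩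
  · have := congrArg (Pr π) e0
    rwa [Pr_map π hπ, Pr_sub, Pr_mul, Pr_mul] at this
  · have := congrArg (Pr π) e1
    rwa [Pr_map π hπ, Pr_sub, Pr_mul, Pr_mul] at this
  · have := congrArg (Pr π) e2
    rwa [Pr_map π hπ, Pr_sub, Pr_mul, Pr_mul] at this
end general
end HB

namespace HB

section general
variable {k : Type*} [Field k]

local notation "T" => MvPolynomial (Fin 3) k
local notation "B" => MvPolynomial (Fin 2) k

lemma split_hom (m : ℕ) (p : T) (hp : p.IsHomogeneous (m+1)) :
    ∃ r : Fin 3 → T, (∀ i, (r i).IsHomogeneous m) ∧ p = ∑ i, X i * r i := by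
  have hp' : p ∈ Ideal.span (Set.range (X : Fin 3 → T)) := by
    rw [← Set.image_univ, mem_ideal_span_X_image]
    intro e he
    by_contra hcon
    push Not at hcon
    have : e = 0 := by ext i; simpa using hcon i
    subst this
    have := hp (mem_support_iff.1 he)
    simp at this
  obtain ⟨a, ha⟩ := Ideal.mem_span_range_iff_exists_fun.1 hp'
  refine ⟨fun i => homogeneousComponent m (a i), fun i => homogeneousComponent_isHomogeneous _ _, ?_⟩
  have := congrArg (homogeneousComponent (m+1)) ha
  rw [homogeneousComponent_eq_self hp, map_sum] at this
  rw [← this]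
  refine Finset.sum_congr rfl fun i _ => ?_
  rw [mul_comm, hcomp_mul _ (isHomogeneous_X k i)]

variable (d : ℕ) (hd : 0 < d) (g : Fin 3 → MvPolynomial (Fin 2) k)
  (hg : ∀ i, (g i).IsHomogeneous d)

include hg in
lemma aeval_hom (m : ℕ) (q : T) (hq : q.IsHomogeneous m) : (aeval g q : B).IsHomogeneous (m * d) := by
  have := hq.aeval g hg
  rwa [mul_comm] at this

include hg hd in
lemma hcomp_aeval (m : ℕ) (q : T) :
    homogeneousComponent (m * d) (aeval g q : B) = aeval g (homogeneousComponent m q) := by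
  conv_lhs => rw [← sum_homogeneousComponent q, map_sum, map_sum]
  have key : ∀ i, homogeneousComponent (m * d) (aeval g (homogeneousComponent i q) : B) =
      if i = m then aeval g (homogeneousComponent m q) else 0 := by
    intro i
    have hi := aeval_hom d g hg i _ (homogeneousComponent_isHomogeneous i q)
    rw [homogeneousComponent_of_mem hi]
    by_cases him : i = m
    · subst him; simp
    · rw [if_neg him, if_neg]
      intro h
      exact him (Nat.eq_of_mul_eq_mul_right hd h).symm
  simp only [key]
  rw [Finset.sum_ite_eq']
  split_ifs with hm
  · rfl
  · rw [homogeneousComponent_eq_zero, map_zero]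
    simpa using hm

variable (hrad : ∀ i, X i ∈ (Ideal.span (Set.range g)).radical)
variable {n : ℕ} (v : Fin n → MvPolynomial (Fin 2) k) (hv : ∀ j, (v j).IsHomogeneous d)
  (hspan : ∀ f : MvPolynomial (Fin 2) k, f.IsHomogeneous d → ∃ (c : Fin n → k) (e : Fin 3 → k),
    f = ∑ j, C (c j) * v j + ∑ i, C (e i) * g i)

include hd hg hrad hspan in
lemma surj (m : ℕ) : ∀ (f : MvPolynomial (Fin 2) k), f.IsHomogeneous (m * d + d) →
    ∃ (p : Fin n → T) (q : T), (∀ j, (p j).IsHomogeneous m) ∧ q.IsHomogeneous (m+1) ∧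
      f = ∑ j, aeval g (p j) * v j + aeval g q := by
  induction m with
  | zero =>
    intro f hf
    obtain ⟨c, e, h⟩ := hspan f (by simpa using hf)
    refine ⟨fun j => C (c j), ∑ i, C (e i) * X i, fun j => isHomogeneous_C _ _, ?_, ?_⟩
    · exact IsHomogeneous.sum _ _ _ fun i _ => by simpa using isHomogeneous_C_mul_X (e i) i
    · rw [h, map_sum]
      simp only [map_mul, aeval_X, aeval_C, algebraMap_eq]
  | succ m ih =>
    intro f hf
    obtain ⟨w, hw, e⟩ := S1 d hd g hg hrad (m * d) f (by convert hf using 1; ring)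
    choose p q hp hq hpq using fun i => ih (w i) (hw i)
    refine ⟨fun j => ∑ i, X i * p i j, ∑ i, X i * q i, ?_, ?_, ?_⟩
    · intro j
      exact IsHomogeneous.sum _ _ _ fun i _ => by
        rw [add_comm]; exact (isHomogeneous_X k i).mul (hp i j)
    · exact IsHomogeneous.sum _ _ _ fun i _ => by
        rw [add_comm]; exact (isHomogeneous_X k i).mul (hq i)
    · rw [e]
      simp only [hpq, map_sum, map_mul, aeval_X, Finset.sum_mul, mul_add, Finset.sum_add_distrib,
        Finset.mul_sum]
      rw [Finset.sum_comm]
      simp only [mul_assoc]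

/-- linear relations -/
def Wset : Set (Fin n → MvPolynomial (Fin 3) k) :=
  {p | (∀ j, (p j).IsHomogeneous 1) ∧ ∃ q : T, q.IsHomogeneous 2 ∧
    ∑ j, aeval g (p j) * v j + aeval g q = 0}

variable (hindep : ∀ (c : Fin n → k) (e : Fin 3 → k),
    ∑ j, C (c j) * v j + ∑ i, C (e i) * g i = 0 → c = 0)

include hd hg hrad hspan hindep hv

lemma ker_hom (m : ℕ) : ∀ (p : Fin n → T) (q : T), (∀ j, (p j).IsHomogeneous m) →
    q.IsHomogeneous (m+1) → ∑ j, aeval g (p j) * v j + aeval g q = 0 →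
    p ∈ Submodule.span (MvPolynomial (Fin 3) k) (Wset g v) := by
  induction m with
  | zero =>
    intro p q hp hq h
    have hc : ∀ (r : T), r.IsHomogeneous 0 → r = C (coeff 0 r) := by
      intro r hr
      rw [← homogeneousComponent_zero, homogeneousComponent_eq_self hr]
    obtain ⟨r, hr, e⟩ := split_hom 0 q hq
    have := hindep (fun j => coeff 0 (p j)) (fun i => coeff 0 (r i)) (by
      rw [← h, e, map_sum]
      congr 1
      · refine Finset.sum_congr rfl fun j _ => ?_
        conv_rhs => rw [hc _ (hp j)]
        simp [algebraMap_eq]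
      · refine Finset.sum_congr rfl fun j _ => ?_
        conv_rhs => rw [hc _ (hr j)]
        simp [algebraMap_eq, mul_comm])
    have hp0 : p = 0 := by
      ext1 j
      rw [hc _ (hp j), congrFun this j]
      simp
    rw [hp0]; exact Submodule.zero_mem _
  | succ m ih =>
    intro p q hp hq h
    rcases m with _ | m
    · exact Submodule.subset_span ⟨hp, q, hq, h⟩
    choose p' hp' ep using fun j => split_hom _ (p j) (hp j)
    obtain ⟨q', hq', eq⟩ := split_hom _ q hq
    -- u i
    let u : Fin 3 → B := fun i => ∑ j, aeval g (p' j i) * v j + aeval g (q' i)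
    have hu : ∀ i, (u i).IsHomogeneous (m * d + d + d) := by
      intro i
      refine IsHomogeneous.add (IsHomogeneous.sum _ _ _ fun j _ => ?_) ?_
      · have := (aeval_hom d g hg _ _ (hp' j i)).mul (hv j)
        convert this using 1; ring
      · have := aeval_hom d g hg _ _ (hq' i)
        convert this using 1; ring
    have hsum : ∑ i, g i * u i = 0 := by
      rw [← h]
      simp only [u, ep, eq, map_sum, map_mul, aeval_X, Finset.sum_mul, mul_add,
        Finset.sum_add_distrib, Finset.mul_sum]
      rw [Finset.sum_comm]
      simp only [mul_assoc]
    obtain ⟨w, hw, e0, e1, e2⟩ := S2 d hd g hg hrad (m * d) u hu hsum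
    choose P Q hP hQ hPQ using fun i => surj d hd g hg hrad v hspan m (w i) (hw i)
    have mk : ∀ i a b : Fin 3, u i = g a * w b - g b * w a →
        (fun j => p' j i - (X a * P b j - X b * P a j)) ∈ Submodule.span T (Wset g v) := by
      intro i a b huab
      refine ih _ (q' i - (X a * Q b - X b * Q a)) ?_ ?_ ?_
      · intro j
        refine (hp' j i).sub (IsHomogeneous.sub ?_ ?_)
        · rw [add_comm]; exact (isHomogeneous_X k _).mul (hP _ j)
        · rw [add_comm]; exact (isHomogeneous_X k _).mul (hP _ j)
      · refine (hq' i).sub (IsHomogeneous.sub ?_ ?_)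
        · have := (isHomogeneous_X k a).mul (hQ b)
          rw [add_comm] at this; exact this
        · have := (isHomogeneous_X k b).mul (hQ a)
          rw [add_comm] at this; exact this
      · have h1 : ∑ j, aeval g (p' j i) * v j + aeval g (q' i) = g a * w b - g b * w a := huab
        rw [hPQ a, hPQ b] at h1
        simp only [map_sub, map_mul, aeval_X, sub_mul, Finset.sum_sub_distrib, mul_assoc,
          ← Finset.mul_sum]
        linear_combination h1
    have m0 := mk 0 1 2 e0
    have m1 := mk 1 2 0 e1
    have m2 := mk 2 0 1 e2
    have : p = (X 0 : T) • (fun j => p' j 0 - (X 1 * P 2 j - X 2 * P 1 j)) +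
        (X 1 : T) • (fun j => p' j 1 - (X 2 * P 0 j - X 0 * P 2 j)) +
        (X 2 : T) • (fun j => p' j 2 - (X 0 * P 1 j - X 1 * P 0 j)) := by
      ext1 j
      simp only [Pi.add_apply, Pi.smul_apply, smul_eq_mul]
      rw [ep j, Fin.sum_univ_three]; ring
    rw [this]
    exact Submodule.add_mem _ (Submodule.add_mem _ (Submodule.smul_mem _ _ m0)
      (Submodule.smul_mem _ _ m1)) (Submodule.smul_mem _ _ m2)

lemma ker_all (p : Fin n → T) (q : T) (h : ∑ j, aeval g (p j) * v j + aeval g q = 0) :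
    p ∈ Submodule.span (MvPolynomial (Fin 3) k) (Wset g v) := by
  have key : ∀ m, (fun j => homogeneousComponent m (p j)) ∈ Submodule.span T (Wset g v) := by
    intro m
    refine ker_hom d hd g hg hrad v hv hspan hindep m _ (homogeneousComponent (m+1) q)
      (fun j => homogeneousComponent_isHomogeneous _ _) (homogeneousComponent_isHomogeneous _ _) ?_
    have := congrArg (homogeneousComponent ((m+1) * d)) h
    rw [map_add, hcomp_aeval d hd g hg, map_sum, map_zero] at this
    rw [← this]
    congr 1
    refine Finset.sum_congr rfl fun j _ => ?_
    have e1 := hcomp_mul _ (hv j) (m * d) (aeval g (p j))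
    rw [hcomp_aeval d hd g hg] at e1
    rw [mul_comm, ← e1, add_mul, one_mul, mul_comm (v j)]
  set N := ∑ j, (p j).totalDegree with hN
  have : p = ∑ m ∈ Finset.range (N + 1), (fun j => homogeneousComponent m (p j)) := by
    ext1 j
    rw [Finset.sum_apply]
    conv_lhs => rw [← sum_homogeneousComponent (p j)]
    refine Finset.sum_subset ?_ ?_
    · intro a ha
      have : (p j).totalDegree ≤ N := Finset.single_le_sum (f := fun j => (p j).totalDegree)
        (fun _ _ => Nat.zero_le _) (Finset.mem_univ j)
      simp at ha ⊢; omega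
    · intro a _ ha
      apply homogeneousComponent_eq_zero
      simpa using ha
  rw [this]
  exact Submodule.sum_mem _ fun m _ => key m

end general
end HB

open scoped Matrix
namespace HB

section columns
variable {k : Type*} [Field k]

local notation "T" => MvPolynomial (Fin 3) k
local notation "B" => MvPolynomial (Fin 2) k

/-- linear forms -/
noncomputable def lin : (Fin 3 → k) →ₗ[k] MvPolynomial (Fin 3) k :=
  Fintype.linearCombination k (X : Fin 3 → MvPolynomial (Fin 3) k)

lemma lin_apply (c : Fin 3 → k) : (lin c : T) = ∑ i, C (c i) * X i := by
  simp [lin, Fintype.linearCombination_apply, smul_eq_C_mul]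

lemma lin_hom (c : Fin 3 → k) : (lin c : T).IsHomogeneous 1 := by
  rw [lin_apply]
  exact IsHomogeneous.sum _ _ _ fun i _ => isHomogeneous_C_mul_X (c i) i

lemma aeval_lin (g : Fin 3 → MvPolynomial (Fin 2) k) (c : Fin 3 → k) :
    aeval g (lin c : T) = ∑ i, C (c i) * g i := by
  rw [lin_apply]; simp [algebraMap_eq]

lemma exists_lin (p : T) (hp : p.IsHomogeneous 1) : ∃ c : Fin 3 → k, p = lin c := by
  obtain ⟨r, hr, e⟩ := split_hom 0 p hp
  have hc : ∀ (r : T), r.IsHomogeneous 0 → r = C (coeff 0 r) := by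
    intro r hr
    rw [← homogeneousComponent_zero, homogeneousComponent_eq_self hr]
  refine ⟨fun i => coeff 0 (r i), ?_⟩
  rw [e, lin_apply]
  refine Finset.sum_congr rfl fun i _ => ?_
  rw [← hc _ (hr i), mul_comm]

/-- the map whose kernel is the space of linear relations -/
noncomputable def Lam {n : ℕ} (g : Fin 3 → MvPolynomial (Fin 2) k)
    (v : Fin n → MvPolynomial (Fin 2) k) :
    ((Fin n → Fin 3 → k) × (Fin 3 → Fin 3 → k)) →ₗ[k] MvPolynomial (Fin 2) k where
  toFun x := ∑ j, aeval g (lin (x.1 j)) * v j + ∑ i, aeval g (lin (x.2 i)) * g i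
  map_add' x y := by
    simp only [Prod.fst_add, Prod.snd_add, Pi.add_apply, map_add, add_mul, Finset.sum_add_distrib]
    ring
  map_smul' c x := by
    simp only [Prod.smul_fst, Prod.smul_snd, Pi.smul_apply, map_smul, smul_mul_assoc,
      ← Finset.smul_sum, smul_add, RingHom.id_apply]

lemma Lam_apply {n : ℕ} (g : Fin 3 → MvPolynomial (Fin 2) k)
    (v : Fin n → MvPolynomial (Fin 2) k) (x) :
    Lam g v x = ∑ j, aeval g (lin (x.1 j)) * v j + ∑ i, aeval g (lin (x.2 i)) * g i := rfl

lemma exists_pad {W : Type*} [AddCommGroup W] [Module k W] [Module.Finite k W]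
    (D : Submodule k W) (N : ℕ)
    (h : Module.finrank k D ≤ N) : ∃ b : Fin N → W, Submodule.span k (Set.range b) = D := by
  let e := Module.finBasis k D
  refine ⟨fun l => if h : l.1 < Module.finrank k D then (e ⟨l.1, h⟩ : W) else 0, ?_⟩
  apply le_antisymm
  · rw [Submodule.span_le]
    rintro _ ⟨l, rfl⟩
    dsimp only
    split_ifs
    · exact (e _).2
    · exact D.zero_mem
  · intro x hx
    have := e.sum_repr ⟨x, hx⟩
    have h2 := congrArg Subtype.val this
    simp only [AddSubmonoidClass.coe_finset_sum, Submodule.coe_smul] at h2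
    rw [← h2]
    refine Submodule.sum_mem _ fun i _ => Submodule.smul_mem _ _ (Submodule.subset_span ?_)
    exact ⟨⟨i.1, i.2.trans_le h⟩, by simp⟩

/-- the embedding of Koszul relations -/
noncomputable def kz (n : ℕ) : (Fin 3 → k) →ₗ[k] ((Fin n → Fin 3 → k) × (Fin 3 → Fin 3 → k)) where
  toFun c := (0, ![![0, c 2, - c 1], ![- c 2, 0, c 0], ![c 1, - c 0, 0]])
  map_add' x y := by
    refine Prod.ext (by simp) ?_
    ext i j; fin_cases i <;> fin_cases j <;> simp [add_comm]
  map_smul' c x := by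
    refine Prod.ext (by simp) ?_
    ext i j; fin_cases i <;> fin_cases j <;> simp

variable (n : ℕ) (g : Fin 3 → MvPolynomial (Fin 2) k)
  (hg : ∀ i, (g i).IsHomogeneous (n+2))
  (hrad : ∀ i, X i ∈ (Ideal.span (Set.range g)).radical)
  (v : Fin n → MvPolynomial (Fin 2) k) (hv : ∀ j, (v j).IsHomogeneous (n+2))
  (hspan : ∀ f : MvPolynomial (Fin 2) k, f.IsHomogeneous (n+2) → ∃ (c : Fin n → k) (e : Fin 3 → k),
    f = ∑ j, C (c j) * v j + ∑ i, C (e i) * g i)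

include hg hrad hspan in
lemma rank_D : Module.finrank k
    ((LinearMap.ker (Lam g v)).map (LinearMap.fst k (Fin n → Fin 3 → k) (Fin 3 → Fin 3 → k))) ≤ n + 1 := by
  have hsub : homogeneousSubmodule (Fin 2) k (0 + (n+2) + (n+2)) ≤ LinearMap.range (Lam g v) := by
    intro f hf
    obtain ⟨w, hw, e⟩ := S1 (n+2) (by omega) g hg hrad 0 f hf
    choose c e' h using fun i => hspan (w i) (by simpa using hw i)
    refine ⟨(fun j i => c i j, fun i' i => e' i i'), ?_⟩
    rw [Lam_apply, e]
    simp only [aeval_lin, h, mul_add, Finset.sum_add_distrib, Finset.mul_sum, Finset.sum_mul]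
    congr 1
    · rw [Finset.sum_comm]
      exact Finset.sum_congr rfl fun i _ => Finset.sum_congr rfl fun j _ => by ring
    · rw [Finset.sum_comm]
      exact Finset.sum_congr rfl fun i _ => Finset.sum_congr rfl fun j _ => by ring
  have h1 : 2 * n + 5 ≤ Module.finrank k (LinearMap.range (Lam g v)) := by
    have := Submodule.finrank_mono hsub
    rw [finrank_hom] at this
    omega
  have h2 := LinearMap.finrank_range_add_finrank_ker (Lam g v)
  have h3 : Module.finrank k ((Fin n → Fin 3 → k) × (Fin 3 → Fin 3 → k)) = 3 * n + 9 := by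
    have hf : ∀ m : ℕ, Module.finrank k (Fin m → Fin 3 → k) = m * 3 := fun m => by
      rw [Module.finrank_pi_fintype]; simp
    rw [Module.finrank_prod, hf, hf]
    omega
  let φ := (LinearMap.fst k (Fin n → Fin 3 → k) (Fin 3 → Fin 3 → k)).domRestrict (LinearMap.ker (Lam g v))
  have h4 := LinearMap.finrank_range_add_finrank_ker φ
  have h5 : LinearMap.range φ = (LinearMap.ker (Lam g v)).map (LinearMap.fst k (Fin n → Fin 3 → k) (Fin 3 → Fin 3 → k)) :=
    LinearMap.range_domRestrict _ _
  rw [← h5]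
  have hkz : ∀ c, kz n c ∈ LinearMap.ker (Lam g v) := by
    intro c
    rw [LinearMap.mem_ker, Lam_apply]
    simp only [kz, LinearMap.coe_mk, AddHom.coe_mk, Pi.zero_apply, map_zero, zero_mul,
      Finset.sum_const_zero, zero_add, aeval_lin, Fin.sum_univ_three]
    simp
    ring
  let κ := (kz n).codRestrict (LinearMap.ker (Lam g v)) hkz
  have hκ : ∀ c, κ c ∈ LinearMap.ker φ := by
    intro c; rfl
  let κ' := κ.codRestrict (LinearMap.ker φ) hκ
  have hinj : Function.Injective κ' := by
    refine (injective_iff_map_eq_zero κ').2 ?_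
    intro c hc
    have hc' : kz n c = 0 := congrArg (fun x => (x.1.1)) hc
    have hc2 := congrArg Prod.snd hc'
    ext i
    fin_cases i
    · simpa [kz] using congrFun (congrFun hc2 1) 2
    · simpa [kz] using congrFun (congrFun hc2 2) 0
    · simpa [kz] using congrFun (congrFun hc2 0) 1
  have h6 := LinearMap.finrank_le_finrank_of_injective hinj
  rw [Module.finrank_fin_fun] at h6
  omega

variable (hindep : ∀ (c : Fin n → k) (e : Fin 3 → k),
    ∑ j, C (c j) * v j + ∑ i, C (e i) * g i = 0 → c = 0)

include hg hrad hspan hindep hv in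
lemma exists_matrix : ∃ P : Matrix (Fin n) (Fin (n+1)) T, (∀ j l, (P j l).IsHomogeneous 1) ∧
    ∀ p, p ∈ LinearMap.range P.mulVecLin ↔ ∃ q : T, ∑ j, aeval g (p j) * v j + aeval g q = 0 := by
  obtain ⟨b, hb⟩ := exists_pad _ _ (rank_D n g hg hrad v hspan)
  let P : Matrix (Fin n) (Fin (n+1)) T := Matrix.of fun j l => lin (b l j)
  have hPu : ∀ u, P *ᵥ u = ∑ l, u l • (fun j => (lin (b l j) : T)) := by
    intro u
    ext1 j
    simp [Matrix.mulVec, dotProduct, P, mul_comm]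
  have hcol : ∀ l, ∃ q : T, ∑ j, aeval g (lin (b l j) : T) * v j + aeval g q = 0 := by
    intro l
    have : b l ∈ ((LinearMap.ker (Lam g v)).map (LinearMap.fst k (Fin n → Fin 3 → k) (Fin 3 → Fin 3 → k))) := by
      rw [← hb]; exact Submodule.subset_span ⟨l, rfl⟩
    obtain ⟨⟨c, r⟩, hx, hcb⟩ := this
    have hcb' : c = b l := hcb
    subst hcb'
    refine ⟨∑ i, lin (r i) * X i, ?_⟩
    have : Lam g v (b l, r) = 0 := hx
    rw [Lam_apply] at this
    rw [← this]; simp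
  refine ⟨P, fun j l => lin_hom _, fun p => ⟨?_, ?_⟩⟩
  · rintro ⟨u, hu⟩
    choose q hq using hcol
    refine ⟨∑ l, u l * q l, ?_⟩
    rw [Matrix.mulVecLin_apply, hPu] at hu
    have : ∑ l, aeval g (u l) * (∑ j, aeval g (lin (b l j) : T) * v j + aeval g (q l)) = 0 := by
      simp only [hq, mul_zero, Finset.sum_const_zero]
    rw [← this, ← hu]
    simp only [Finset.sum_apply, Pi.smul_apply, smul_eq_mul, map_sum, map_mul, mul_add,
      Finset.sum_add_distrib, Finset.mul_sum, Finset.sum_mul]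
    rw [Finset.sum_comm]
    simp only [mul_assoc]
  · rintro ⟨q, hq⟩
    have h1 := ker_all (n+2) (by omega) g hg hrad v hv hspan hindep p q hq
    refine (Submodule.span_le.2 ?_) h1
    rintro p ⟨hp, q, hq, h⟩
    choose c hc using fun j => exists_lin (p j) (hp j)
    obtain ⟨r, hr, e⟩ := split_hom 1 q hq
    choose s hs using fun j => exists_lin (r j) (hr j)
    have hcD : c ∈ ((LinearMap.ker (Lam g v)).map (LinearMap.fst k (Fin n → Fin 3 → k) (Fin 3 → Fin 3 → k))) := by
      refine ⟨(c, s), ?_, rfl⟩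
      show Lam g v (c, s) = 0
      rw [Lam_apply, ← h, e]
      simp [hc, hs, mul_comm]
    rw [← hb] at hcD
    obtain ⟨a, ha⟩ := (Submodule.mem_span_range_iff_exists_fun k).1 hcD
    refine ⟨fun l => C (a l), ?_⟩
    rw [Matrix.mulVecLin_apply, hPu]
    ext1 j
    rw [hc, ← ha]
    simp [smul_eq_C_mul]

end columns
end HB

namespace HB

section ver
variable {k : Type*} [Field k]

local notation "T" => MvPolynomial (Fin 3) k
local notation "B" => MvPolynomial (Fin 2) k

lemma mem_A_iff (g : Fin 3 → MvPolynomial (Fin 2) k) (x : B) :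
    x ∈ Algebra.adjoin k (Set.range g) ↔ ∃ p : T, aeval g p = x := by
  rw [Algebra.adjoin_range_eq_range_aeval]; rfl

lemma exists_prime_ker (g : Fin 3 → MvPolynomial (Fin 2) k) : ∃ f : T, Prime f ∧ aeval g f = 0 := by
  have hne : ¬ Function.Injective (aeval g : T →ₐ[k] B) := by
    intro h
    have h1 : AlgebraicIndependent k g := h
    have h2 := h1.lift_cardinalMk_le_trdeg
    rw [MvPolynomial.trdeg_of_isDomain] at h2
    simp at h2
    exact absurd h2 (by norm_num)
  obtain ⟨f, hf, hf0⟩ : ∃ f : T, aeval g f = 0 ∧ f ≠ 0 := by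
    by_contra hcon
    push Not at hcon
    exact hne ((injective_iff_map_eq_zero _).2 hcon)
  induction f using UniqueFactorizationMonoid.induction_on_prime with
  | h₁ => exact absurd rfl hf0
  | h₂ x hx =>
    have := hx.map (aeval g : T →ₐ[k] B)
    rw [hf] at this
    exact absurd this not_isUnit_zero
  | h₃ a p ha hp ih =>
    rw [map_mul, mul_eq_zero] at hf
    rcases hf with h | h
    · exact ⟨p, hp, h⟩
    · exact ih h ha

variable (d : ℕ) (hd : 0 < d) (g : Fin 3 → MvPolynomial (Fin 2) k)
  (hg : ∀ i, (g i).IsHomogeneous d)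
  (hrad : ∀ i, X i ∈ (Ideal.span (Set.range g)).radical)

include hg in
lemma aeval_mem (p : T) : aeval g p ∈ veronese k d := by
  have h : aeval g p ∈ Algebra.adjoin k (Set.range g) := (mem_A_iff g _).2 ⟨p, rfl⟩
  refine Algebra.adjoin_mono ?_ h
  rintro _ ⟨i, rfl⟩
  exact hg i

variable {n : ℕ} (v : Fin n → MvPolynomial (Fin 2) k) (hv : ∀ j, (v j).IsHomogeneous d)
  (hspan : ∀ f : MvPolynomial (Fin 2) k, f.IsHomogeneous d → ∃ (c : Fin n → k) (e : Fin 3 → k),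
    f = ∑ j, C (c j) * v j + ∑ i, C (e i) * g i)

/-- the `T`-span of `1` and the `v j` -/
def Sp (f : MvPolynomial (Fin 2) k) : Prop :=
  ∃ (p : Fin n → MvPolynomial (Fin 3) k) (q : MvPolynomial (Fin 3) k),
    f = ∑ j, aeval g (p j) * v j + aeval g q

lemma Sp.add {a b : B} (ha : Sp g v a) (hb : Sp g v b) : Sp g v (a + b) := by
  obtain ⟨p, q, rfl⟩ := ha
  obtain ⟨p', q', rfl⟩ := hb
  refine ⟨p + p', q + q', ?_⟩
  simp only [Pi.add_apply, map_add, add_mul, Finset.sum_add_distrib]; ring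

lemma Sp.mul {a : B} (t : T) (ha : Sp g v a) : Sp g v (aeval g t * a) := by
  obtain ⟨p, q, rfl⟩ := ha
  refine ⟨fun j => t * p j, t * q, ?_⟩
  simp only [map_mul, mul_add, Finset.mul_sum, mul_assoc]

lemma Sp.sum {ι : Type*} (s : Finset ι) (a : ι → B) (ha : ∀ i, Sp g v (a i)) :
    Sp g v (∑ i ∈ s, a i) := by
  classical
  induction s using Finset.induction_on with
  | empty => exact ⟨0, 0, by simp⟩
  | insert i s hi ih => rw [Finset.sum_insert hi]; exact Sp.add g v (ha i) ih

include hd hg hrad hv hspan in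
lemma Sp_of_mem (f : B) (hf : f ∈ veronese k d) : Sp g v f := by
  have hvj : ∀ j, Sp g v (v j) := fun j => by
    refine ⟨Pi.single j 1, 0, ?_⟩
    rw [Finset.sum_eq_single j]
    · simp
    · intro b _ hb; simp [hb]
    · simp
  have hT : ∀ q : T, Sp g v (aeval g q) := fun q => ⟨0, q, by simp⟩
  refine Algebra.adjoin_induction (p := fun f _ => Sp g v f) ?_ ?_ ?_ ?_ hf
  · intro x hx
    obtain ⟨p, q, -, -, h⟩ := surj d hd g hg hrad v hspan 0 x (by simpa using hx)
    exact ⟨p, q, h⟩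
  · intro r
    refine ⟨0, C r, ?_⟩
    simp
  · intro x y _ _ hx hy; exact Sp.add g v hx hy
  · rintro x y _ _ ⟨p, q, rfl⟩ ⟨p', q', rfl⟩
    have hvv : ∀ i j, Sp g v (v i * v j) := by
      intro i j
      obtain ⟨p, q, -, -, h⟩ := surj d hd g hg hrad v hspan 1 (v i * v j)
        (by rw [one_mul]; exact (hv i).mul (hv j))
      exact ⟨p, q, h⟩
    have hpv : ∀ i, Sp g v (v i * (∑ j, aeval g (p' j) * v j + aeval g q')) := by
      intro i
      rw [mul_add, Finset.mul_sum]
      refine Sp.add g v (Sp.sum g v _ _ fun j => ?_) ?_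
      · rw [mul_left_comm]; exact Sp.mul g v _ (hvv i j)
      · rw [mul_comm]; exact Sp.mul g v _ (hvj i)
    rw [add_mul, Finset.sum_mul]
    refine Sp.add g v (Sp.sum g v _ _ fun j => ?_) (Sp.mul g v _ ⟨p', q', rfl⟩)
    rw [mul_assoc]
    exact Sp.mul g v _ (hpv j)

variable (hbir : ∀ v ∈ veronese k d,
      ∃ x ∈ Algebra.adjoin k (Set.range g), ∃ y ∈ Algebra.adjoin k (Set.range g),
        y ≠ 0 ∧ y * v = x)

include hd hg hrad hv hspan hbir in
lemma exists_denom : ∃ y : T, aeval g y ≠ 0 ∧ ∀ f ∈ veronese k d, ∃ x : T,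
    aeval g y * f = aeval g x := by
  have h : ∀ j, ∃ y x : T, aeval g y ≠ 0 ∧ aeval g y * v j = aeval g x := by
    intro j
    obtain ⟨x, hx, y, hy, hy0, h⟩ := hbir (v j) (Algebra.subset_adjoin (hv j))
    obtain ⟨x', rfl⟩ := (mem_A_iff g x).1 hx
    obtain ⟨y', rfl⟩ := (mem_A_iff g y).1 hy
    exact ⟨y', x', hy0, h⟩
  choose y x hy hyx using h
  refine ⟨∏ j, y j, ?_, ?_⟩
  · rw [map_prod]; exact Finset.prod_ne_zero_iff.2 fun j _ => hy j
  · intro f hf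
    obtain ⟨p, q, rfl⟩ := Sp_of_mem d hd g hg hrad v hv hspan f hf
    classical
    refine ⟨∑ j, p j * (x j * ∏ i ∈ Finset.univ.erase j, y i) + (∏ j, y j) * q, ?_⟩
    rw [map_add, map_mul, mul_add, Finset.mul_sum, map_sum]
    congr 1
    refine Finset.sum_congr rfl fun j _ => ?_
    rw [← Finset.mul_prod_erase _ _ (Finset.mem_univ j)]
    simp only [map_mul, ← hyx]
    ring

end ver

section indep
variable {k : Type*} [Field k]

local notation "T" => MvPolynomial (Fin 3) k
local notation "B" => MvPolynomial (Fin 2) k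

variable (d : ℕ) (hd : 3 ≤ d) (g : Fin 3 → MvPolynomial (Fin 2) k)
  (hg : ∀ i, (g i).IsHomogeneous d)
  (hrad : ∀ i, X i ∈ (Ideal.span (Set.range g)).radical)
  (hbir : ∀ v ∈ veronese k d,
      ∃ x ∈ Algebra.adjoin k (Set.range g), ∃ y ∈ Algebra.adjoin k (Set.range g),
        y ≠ 0 ∧ y * v = x)

include hd hg hrad hbir in
lemma g_indep : LinearIndependent k
    (fun i => (⟨g i, hg i⟩ : homogeneousSubmodule (Fin 2) k d)) := by
  have hd0 : 0 < d := by omega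
  set W := homogeneousSubmodule (Fin 2) k d with hW
  set g' : Fin 3 → W := fun i => ⟨g i, hg i⟩ with hg'
  let bs := Module.finBasis k W
  let v : Fin (Module.finrank k W) → B := fun j => (bs j : B)
  have hv : ∀ j, (v j).IsHomogeneous d := fun j => (bs j).2
  have hspan : ∀ f : B, f.IsHomogeneous d → ∃ (c : Fin (Module.finrank k W) → k) (e : Fin 3 → k),
      f = ∑ j, C (c j) * v j + ∑ i, C (e i) * g i := by
    intro f hf
    refine ⟨fun j => bs.repr ⟨f, hf⟩ j, 0, ?_⟩
    have h2 := congrArg Subtype.val (bs.sum_repr ⟨f, hf⟩)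
    simp only [AddSubmonoidClass.coe_finset_sum, Submodule.coe_smul] at h2
    conv_lhs => rw [← h2]
    simp [smul_eq_C_mul, v]
  obtain ⟨y, hy0, hy⟩ := exists_denom d hd0 g hg hrad v hv hspan hbir
  rw [linearIndependent_iff_card_le_finrank_span]
  by_contra hcon
  rw [Fintype.card_fin, not_le] at hcon
  obtain ⟨h', hh'⟩ := exists_pad (Submodule.span k (Set.range g')) 2 (Nat.lt_succ_iff.1 hcon)
  have hgi : ∀ i, ∃ a : Fin 2 → k, ∑ l, a l • h' l = g' i := by
    intro i
    apply (Submodule.mem_span_range_iff_exists_fun k).1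
    rw [hh']; exact Submodule.subset_span ⟨i, rfl⟩
  choose a ha using hgi
  let h : Fin 2 → B := fun l => (h' l : B)
  let α : Fin 3 → B := fun i => ∑ l, C (a i l) * X l
  have hα : ∀ i, (α i).IsHomogeneous 1 := fun i =>
    IsHomogeneous.sum _ _ _ fun l _ => isHomogeneous_C_mul_X _ _
  have hcomp : ∀ t : T, aeval g t = aeval h (aeval α t : B) := by
    intro t
    have : (aeval g : T →ₐ[k] B) = (aeval h : B →ₐ[k] B).comp (aeval α : T →ₐ[k] B) := by
      ext1 i
      have h2 := congrArg Subtype.val (ha i)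
      simp only [AddSubmonoidClass.coe_finset_sum, Submodule.coe_smul] at h2
      rw [AlgHom.comp_apply, aeval_X, aeval_X]
      simp only [α, map_sum, map_mul, aeval_X, aeval_C, algebraMap_eq, h]
      simp only [← smul_eq_C_mul]
      exact h2.symm
    rw [this]; rfl
  obtain ⟨c, hc⟩ : ∃ c, aeval g (homogeneousComponent c y) ≠ 0 := by
    by_contra hcon
    push Not at hcon
    apply hy0
    rw [← sum_homogeneousComponent y, map_sum]
    exact Finset.sum_eq_zero fun i _ => hcon i
  set Y := aeval g (homogeneousComponent c y) with hY
  let μ : homogeneousSubmodule (Fin 2) k (c * d + d) →ₗ[k] B :=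
    (LinearMap.mulLeft k Y).domRestrict _
  have hμ : Function.Injective μ := by
    intro f1 f2 h12
    exact Subtype.ext (mul_left_cancel₀ hc h12)
  have hrange : LinearMap.range μ ≤
      (homogeneousSubmodule (Fin 2) k (2 * c + 1)).map (aeval h : B →ₐ[k] B).toLinearMap := by
    rintro _ ⟨⟨f, hf⟩, rfl⟩
    have hf' : f.IsHomogeneous (c * d + d) := hf
    have hfV : f ∈ veronese k d := by
      obtain ⟨p, q, -, -, e⟩ := surj d hd0 g hg hrad v hspan c f hf'
      rw [e]
      exact add_mem (sum_mem fun j _ => mul_mem (aeval_mem d g hg _) (Algebra.subset_adjoin (hv j)))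
        (aeval_mem d g hg _)
    obtain ⟨x, hx⟩ := hy f hfV
    have h1 := hcomp_mul f hf' (c * d) (aeval g y)
    rw [hcomp_aeval d hd0 g hg, mul_comm f, hx,
      show c * d + (c * d + d) = (2 * c + 1) * d by ring, hcomp_aeval d hd0 g hg] at h1
    refine ⟨aeval α (homogeneousComponent (2 * c + 1) x), ?_, ?_⟩
    · have := (homogeneousComponent_isHomogeneous (2 * c + 1) x).aeval α hα
      rw [one_mul] at this
      exact this
    · show aeval h (aeval α (homogeneousComponent (2 * c + 1) x) : B) = Y * f
      rw [← hcomp, h1, mul_comm]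
  have e1 := LinearMap.finrank_range_of_inj hμ
  rw [finrank_hom] at e1
  have e2 := Submodule.finrank_mono hrange
  have e3 := Submodule.finrank_map_le (aeval h : B →ₐ[k] B).toLinearMap
    (homogeneousSubmodule (Fin 2) k (2 * c + 1))
  rw [finrank_hom] at e3
  nlinarith

end indep

section choosev

lemma exists_compl_basis {k W : Type*} [Field k] [AddCommGroup W] [Module k W] [Module.Finite k W]
    (n : ℕ) (g' : Fin 3 → W) (hli : LinearIndependent k g') (hW : Module.finrank k W = n + 3) :
    ∃ b : Fin n → W, (∀ f, ∃ (c : Fin n → k) (e : Fin 3 → k),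
        f = ∑ j, c j • b j + ∑ i, e i • g' i) ∧
      ∀ (c : Fin n → k) (e : Fin 3 → k), ∑ j, c j • b j + ∑ i, e i • g' i = 0 → c = 0 := by
  obtain ⟨U, hU⟩ := Submodule.exists_isCompl (Submodule.span k (Set.range g'))
  have hr := Submodule.finrank_add_eq_of_isCompl hU
  rw [finrank_span_eq_card hli, Fintype.card_fin, hW] at hr
  let bs := Module.finBasisOfFinrankEq k U (show Module.finrank k U = n by omega)
  have h1 : ∀ c : Fin n → k, ((∑ j, c j • bs j : U) : W) = ∑ j, c j • (bs j : W) := by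
    intro c
    simp
  refine ⟨fun j => (bs j : W), ?_, ?_⟩
  · intro f
    have : f ∈ Submodule.span k (Set.range g') ⊔ U := by
      rw [hU.sup_eq_top]; trivial
    obtain ⟨a, ha, b, hb, hab⟩ := Submodule.mem_sup.1 this
    obtain ⟨e, he⟩ := (Submodule.mem_span_range_iff_exists_fun k).1 ha
    refine ⟨fun j => bs.repr ⟨b, hb⟩ j, e, ?_⟩
    rw [← h1, bs.sum_repr, he, add_comm, hab]
  · intro c e h
    rw [← h1] at h
    have hmem : ((∑ j, c j • bs j : U) : W) ∈ Submodule.span k (Set.range g') := by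
      rw [eq_neg_of_add_eq_zero_left h]
      exact Submodule.neg_mem _ (Submodule.sum_mem _ fun i _ => Submodule.smul_mem _ _
        (Submodule.subset_span ⟨i, rfl⟩))
    have hz := Submodule.disjoint_def.1 hU.disjoint _ hmem (Subtype.prop _)
    have hz' : (∑ j, c j • bs j : U) = 0 := Subtype.ext hz
    funext j
    exact (Fintype.linearIndependent_iff.1 bs.linearIndependent) c hz' j

variable {k : Type*} [Field k] (n : ℕ) (g : Fin 3 → MvPolynomial (Fin 2) k)
  (hg : ∀ i, (g i).IsHomogeneous (n + 2)) (hli : LinearIndependent k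
    (fun i => (⟨g i, hg i⟩ : homogeneousSubmodule (Fin 2) k (n + 2))))

include hli in
lemma exists_v : ∃ v : Fin n → MvPolynomial (Fin 2) k, (∀ j, (v j).IsHomogeneous (n + 2)) ∧
    (∀ f : MvPolynomial (Fin 2) k, f.IsHomogeneous (n+2) → ∃ (c : Fin n → k) (e : Fin 3 → k),
      f = ∑ j, C (c j) * v j + ∑ i, C (e i) * g i) ∧
    (∀ (c : Fin n → k) (e : Fin 3 → k),
      ∑ j, C (c j) * v j + ∑ i, C (e i) * g i = 0 → c = 0) := by
  obtain ⟨b, hb1, hb2⟩ := exists_compl_basis n _ hli (finrank_hom (n+2))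
  have key : ∀ (c : Fin n → k) (e : Fin 3 → k),
      ((∑ j, c j • b j + ∑ i, e i • (⟨g i, hg i⟩ : homogeneousSubmodule (Fin 2) k (n + 2)) :
        homogeneousSubmodule (Fin 2) k (n + 2)) : MvPolynomial (Fin 2) k) =
      ∑ j, C (c j) * (b j : MvPolynomial (Fin 2) k) + ∑ i, C (e i) * g i := by
    intro c e
    rw [Submodule.coe_add, AddSubmonoidClass.coe_finset_sum, AddSubmonoidClass.coe_finset_sum]
    simp only [Submodule.coe_smul, smul_eq_C_mul]
  refine ⟨fun j => (b j : MvPolynomial (Fin 2) k), fun j => (b j).2, ?_, ?_⟩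
  · intro f hf
    obtain ⟨c, e, h⟩ := hb1 ⟨f, hf⟩
    exact ⟨c, e, (congrArg Subtype.val h).trans (key c e)⟩
  · intro c e h
    refine hb2 c e (Subtype.ext ?_)
    rw [key]; exact h
end choosev
end HB

namespace HB
open scoped Matrix
section fin
variable {k : Type*} [Field k]
local notation "T" => MvPolynomial (Fin 3) k

lemma det_hom {m : ℕ} (M : Matrix (Fin m) (Fin m) T) (h : ∀ i j, (M i j).IsHomogeneous 1) :
    M.det.IsHomogeneous m := by
  rw [Matrix.det_apply]
  refine IsHomogeneous.sum _ _ _ fun σ _ => ?_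
  have h1 : (∏ i, M (σ i) i).IsHomogeneous m := by
    have := IsHomogeneous.prod Finset.univ (fun i => M (σ i) i) (fun _ => 1) (fun i _ => h _ _)
    simpa using this
  rcases Int.units_eq_one_or (Equiv.Perm.sign σ) with h | h
  · rw [h, one_smul]; exact h1
  · rw [h, Units.neg_smul, one_smul]; exact h1.neg

lemma Dl_hom {n : ℕ} (P : Matrix (Fin n) (Fin (n+1)) T) (h : ∀ i j, (P i j).IsHomogeneous 1) (i) :
    (Dl P i).IsHomogeneous n := by
  have h1 : (P.submatrix id i.succAbove).det.IsHomogeneous n := det_hom _ fun a b => h _ _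
  unfold Dl
  rcases neg_one_pow_eq_or T (i : ℕ) with h | h
  · rw [h, one_mul]; exact h1
  · rw [h, neg_one_mul]; exact h1.neg

/-- the abstract end of the argument -/
lemma final {n : ℕ} (hn : 1 ≤ n) {M : Type*} [AddCommGroup M] [Module (MvPolynomial (Fin 3) k) M]
    (P : Matrix (Fin n) (Fin (n+1)) (MvPolynomial (Fin 3) k)) (hP : ∀ i j, (P i j).IsHomogeneous 1)
    (e : M ≃ₗ[MvPolynomial (Fin 3) k] ((Fin n → MvPolynomial (Fin 3) k) ⧸ LinearMap.range P.mulVecLin))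
    (L : Ideal (MvPolynomial (Fin 3) k)) (hL : L = Module.annihilator (MvPolynomial (Fin 3) k) M)
    (f y : MvPolynomial (Fin 3) k) (hfp : Prime f) (hfL : f ∈ L) (hyL : y ∈ L) (hfy : ¬ f ∣ y) :
    ∃ (gens : Fin (n + 1) → MvPolynomial (Fin 3) k)
      (ψ : Matrix (Fin (n + 1)) (Fin n) (MvPolynomial (Fin 3) k)),
      (∀ i, (gens i).IsHomogeneous n) ∧
      L = Ideal.span (Set.range gens) ∧
      (∀ i j, (ψ i j).IsHomogeneous 1) ∧
      Function.Injective ψ.mulVecLin ∧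
      LinearMap.range ψ.mulVecLin =
        LinearMap.ker (Matrix.mulVecLin
          (Matrix.of fun (_ : Fin 1) (i : Fin (n + 1)) => gens i)) ∧
      Nonempty (M ≃ₗ[MvPolynomial (Fin 3) k]
        ((Fin n → MvPolynomial (Fin 3) k) ⧸
          LinearMap.range ψ.transpose.mulVecLin)) ∧
      ringKrullDim (MvPolynomial (Fin 3) k ⧸ L) = 1 ∧
      (∃ t ∈ Ideal.span (Set.range (X : Fin 3 → MvPolynomial (Fin 3) k)),
        Ideal.Quotient.mk L t ∈ nonZeroDivisors (MvPolynomial (Fin 3) k ⧸ L)) := by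
  have hmem : ∀ a : T, a ∈ L ↔ ∀ z : Fin n → T, ∃ u, P *ᵥ u = a • z := by
    intro a
    rw [hL, e.annihilator_eq, Module.mem_annihilator]
    constructor
    · intro h z
      have := h (Submodule.Quotient.mk z)
      rw [← Submodule.Quotient.mk_smul, Submodule.Quotient.mk_eq_zero] at this
      exact this
    · intro h m
      obtain ⟨z, rfl⟩ := Submodule.Quotient.mk_surjective _ m
      rw [← Submodule.Quotient.mk_smul, Submodule.Quotient.mk_eq_zero]
      exact h z
  have hp : ∀ p : T, Prime p → ∃ a, (∀ z : Fin n → T, ∃ u, P *ᵥ u = a • z) ∧ ¬ p ∣ a := by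
    intro p hpp
    by_cases h : p ∣ f
    · refine ⟨y, (hmem y).1 hyL, fun hpy => hfy ?_⟩
      have := (hpp.irreducible.associated_of_dvd hfp.irreducible h)
      exact this.symm.dvd.trans hpy
    · exact ⟨f, (hmem f).1 hfL, h⟩
  have h₀ := (hmem f).1 hfL
  obtain ⟨i₀, hi₀⟩ := exists_ne P f hfp.ne_zero h₀
  have hLs : L = Ideal.span (Set.range (Dl P)) := by
    apply le_antisymm
    · intro a ha
      exact mem_span P f hfp.ne_zero h₀ hp a ((hmem a).1 ha)
    · rw [Ideal.span_le]
      rintro _ ⟨i, rfl⟩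
      exact (hmem _).2 (Dl_smul_mem P i)
  refine ⟨Dl P, Pᵀ, Dl_hom P hP, hLs, fun i j => hP j i, ?_, ?_, ⟨e⟩, ?_⟩
  · refine (injective_iff_map_eq_zero _).2 fun z hz => ?_
    exact transpose_inj P i₀ hi₀ z hz
  · ext w
    have hw : w ∈ LinearMap.ker (Matrix.mulVecLin
          (Matrix.of fun (_ : Fin 1) (i : Fin (n + 1)) => Dl P i)) ↔ ∑ i, w i * Dl P i = 0 := by
      rw [LinearMap.mem_ker, Matrix.mulVecLin_apply]
      constructor
      · intro h
        have := congrFun h 0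
        simpa [Matrix.mulVec, dotProduct, mul_comm] using this
      · intro h
        ext1 i
        simpa [Matrix.mulVec, dotProduct, mul_comm] using h
    rw [hw]
    constructor
    · rintro ⟨z, rfl⟩
      have h1 : (Pᵀ *ᵥ z) ⬝ᵥ Dl P = 0 := by
        rw [Matrix.mulVec_transpose, ← Matrix.dotProduct_mulVec, mulVec_Dl, dotProduct_zero]
      exact h1
    · intro h
      exact exact P f hfp.ne_zero h₀ hp w h
  · refine cm_dim L ?_ ?_ f y hfp.ne_zero hfp hfL hyL hfy
    · intro a ha
      rw [hmem]
      intro z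
      refine socle P i₀ hi₀ (ker_eq P f hfp.ne_zero h₀ hp) (a • z) fun i => ?_
      obtain ⟨u, hu⟩ := (hmem _).1 (ha i) z
      exact ⟨u, by rw [hu, smul_smul]⟩
    · rw [hLs, Ideal.span_le]
      rintro _ ⟨i, rfl⟩
      obtain ⟨m, rfl⟩ : ∃ m, n = m + 1 := ⟨n - 1, by omega⟩
      obtain ⟨r, -, hr⟩ := split_hom m _ (Dl_hom P hP i)
      rw [hr]
      exact Ideal.sum_mem _ fun j _ => Ideal.mul_mem_right _ _ (Ideal.subset_span ⟨j, rfl⟩)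

end fin
end HB

/-- Let `k` be a field, `B = k[x,y]`, `d ≥ 3`, and `g = (g₁,g₂,g₃)` a triple of degree-`d` forms
such that the ideal `(g₁,g₂,g₃)B` has height `2` and the inclusion `A = k[g₁,g₂,g₃] ⊆ V` (the
`d`-th Veronese subring of `B`) is birational.  Let `c = A : V` be the conductor and `L` its
preimage in `T = k[T₁,T₂,T₃]` (equivalently, `L` is the annihilator of the `T`-module `V/A`,
where `T` acts through `Tᵢ ↦ gᵢ`).  Then the homogeneous minimal free `T`-resolution of `T/L`
has the form `0 → T^{d-2}(−d+1) → T^{d-1}(−d+2) → T → T/L → 0`: `L` is generated by `d−1` forms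
of degree `d−2` whose syzygy module is free on `d−2` generators, with a presentation matrix `ψ`
of linear forms.  In particular `T/L` is Cohen–Macaulay of dimension `1`, and the canonical
module `ω_{T/L}` — the cokernel of the transposed map `(T^{d-1})^* → (T^{d-2})^*` — is
isomorphic to `V/A`. -/
theorem stmt15 {k : Type*} [Field k] (d : ℕ) (hd : 3 ≤ d)
    (g : Fin 3 → MvPolynomial (Fin 2) k) (hg : ∀ i, (g i).IsHomogeneous d)
    (hht : idealHeight (Ideal.span (Set.range g)) = 2)
    (hbir : ∀ v ∈ veronese k d,
      ∃ x ∈ Algebra.adjoin k (Set.range g), ∃ y ∈ Algebra.adjoin k (Set.range g),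
        y ≠ 0 ∧ y * v = x) :
    -- `T = k[T₁,T₂,T₃]` acts on `V` through `Tᵢ ↦ gᵢ`
    letI : Algebra (MvPolynomial (Fin 3) k) (veronese k d) :=
      ((aeval fun i : Fin 3 =>
        (⟨g i, Algebra.subset_adjoin (hg i)⟩ : veronese k d)).toRingHom).toAlgebra
    -- the `T`-module `V/A`
    let M := (veronese k d) ⧸
      LinearMap.range (Algebra.linearMap (MvPolynomial (Fin 3) k) (veronese k d))
    -- the preimage `L` of the conductor `c = A : V` in `T`
    let L : Ideal (MvPolynomial (Fin 3) k) := Module.annihilator (MvPolynomial (Fin 3) k) M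
    ∃ (gens : Fin (d - 1) → MvPolynomial (Fin 3) k)
      (ψ : Matrix (Fin (d - 1)) (Fin (d - 2)) (MvPolynomial (Fin 3) k)),
      -- `L` is generated by `d − 1` forms of degree `d − 2` ...
      (∀ i, (gens i).IsHomogeneous (d - 2)) ∧
      L = Ideal.span (Set.range gens) ∧
      -- ... whose relations are given by a matrix of linear forms ...
      (∀ i j, (ψ i j).IsHomogeneous 1) ∧
      Function.Injective ψ.mulVecLin ∧
      LinearMap.range ψ.mulVecLin =
        LinearMap.ker (Matrix.mulVecLin
          (Matrix.of fun (_ : Fin 1) (i : Fin (d - 1)) => gens i)) ∧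
      -- the canonical module `ω_{T/L}`, i.e. the cokernel of the transposed map, is `V/A`:
      Nonempty (M ≃ₗ[MvPolynomial (Fin 3) k]
        ((Fin (d - 2) → MvPolynomial (Fin 3) k) ⧸
          LinearMap.range ψ.transpose.mulVecLin)) ∧
      -- `T/L` is one-dimensional ...
      ringKrullDim (MvPolynomial (Fin 3) k ⧸ L) = 1 ∧
      -- ... and Cohen–Macaulay (its maximal homogeneous ideal contains a nonzerodivisor)
      (∃ t ∈ Ideal.span (Set.range (X : Fin 3 → MvPolynomial (Fin 3) k)),
        Ideal.Quotient.mk L t ∈ nonZeroDivisors (MvPolynomial (Fin 3) k ⧸ L)) := by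
  obtain ⟨n, rfl⟩ : ∃ n, d = n + 2 := ⟨d - 2, by omega⟩
  have hrad := HB.X_mem_radical (n+2) g hg hht
  have hli := HB.g_indep (n+2) hd g hg hrad hbir
  obtain ⟨v, hv, hspan, hindep⟩ := HB.exists_v n g hg hli
  obtain ⟨P, hP, hrange⟩ := HB.exists_matrix n g hg hrad v hv hspan hindep
  obtain ⟨f, hfp, hf0⟩ := HB.exists_prime_ker g
  obtain ⟨y, hy0, hy⟩ := HB.exists_denom (n+2) (by omega) g hg hrad v hv hspan hbir
  intro M L
  letI : Algebra (MvPolynomial (Fin 3) k) (veronese k (n+2)) :=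
      ((aeval fun i : Fin 3 =>
        (⟨g i, Algebra.subset_adjoin (hg i)⟩ : veronese k (n+2))).toRingHom).toAlgebra
  have halg : ∀ t : MvPolynomial (Fin 3) k,
      ((algebraMap (MvPolynomial (Fin 3) k) (veronese k (n+2)) t : veronese k (n+2)) :
        MvPolynomial (Fin 2) k) = aeval g t := by
    intro t
    have : ((veronese k (n+2)).val.comp (aeval fun i : Fin 3 =>
        (⟨g i, Algebra.subset_adjoin (hg i)⟩ : veronese k (n+2)))) = aeval g := by
      ext1 i
      simp
    exact DFunLike.congr_fun this t
  have hsmul : ∀ (t : MvPolynomial (Fin 3) k) (w : veronese k (n+2)),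
      ((t • w : veronese k (n+2)) : MvPolynomial (Fin 2) k) = aeval g t * w := by
    intro t w
    rw [Algebra.smul_def, ← halg]; rfl
  let N := LinearMap.range (Algebra.linearMap (MvPolynomial (Fin 3) k) (veronese k (n+2)))
  have hN : ∀ w : veronese k (n+2), w ∈ N ↔ ∃ q : MvPolynomial (Fin 3) k, aeval g q = (w : MvPolynomial (Fin 2) k) := by
    intro w
    constructor
    · rintro ⟨q, rfl⟩
      exact ⟨q, (halg q).symm⟩
    · rintro ⟨q, hq⟩
      exact ⟨q, Subtype.ext ((halg q).trans hq)⟩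
  let v' : Fin n → veronese k (n+2) := fun j => ⟨v j, Algebra.subset_adjoin (hv j)⟩
  let θ₀ : (Fin n → MvPolynomial (Fin 3) k) →ₗ[MvPolynomial (Fin 3) k] veronese k (n+2) :=
    Fintype.linearCombination (MvPolynomial (Fin 3) k) v'
  have hθ₀ : ∀ p, ((θ₀ p : veronese k (n+2)) : MvPolynomial (Fin 2) k) = ∑ j, aeval g (p j) * v j := by
    intro p
    rw [Fintype.linearCombination_apply, AddSubmonoidClass.coe_finset_sum]
    exact Finset.sum_congr rfl fun j _ => hsmul _ _
  let θ : (Fin n → MvPolynomial (Fin 3) k) →ₗ[MvPolynomial (Fin 3) k] M := N.mkQ.comp θ₀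
  have hθs : Function.Surjective θ := by
    intro m
    obtain ⟨w, rfl⟩ := Submodule.Quotient.mk_surjective _ m
    obtain ⟨p, q, h⟩ := HB.Sp_of_mem (n+2) (by omega) g hg hrad v hv hspan w.1 w.2
    refine ⟨p, ?_⟩
    refine (Submodule.Quotient.eq N).2 ?_
    rw [hN]
    refine ⟨-q, ?_⟩
    rw [Subalgebra.coe_sub, hθ₀, h, map_neg]; ring
  have hθk : LinearMap.ker θ = LinearMap.range P.mulVecLin := by
    ext p
    rw [hrange p]
    have : p ∈ LinearMap.ker θ ↔ θ₀ p ∈ N := by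
      rw [LinearMap.mem_ker]
      exact Submodule.Quotient.mk_eq_zero N
    rw [this, hN, hθ₀]
    constructor
    · rintro ⟨q, hq⟩
      exact ⟨-q, by rw [map_neg, hq]; ring⟩
    · rintro ⟨q, hq⟩
      exact ⟨-q, by rw [map_neg]; linear_combination -hq⟩
  let e := (Submodule.quotEquivOfEq _ _ hθk).symm.trans (θ.quotKerEquivOfSurjective hθs)
  have hmemL : ∀ a : MvPolynomial (Fin 3) k, (∀ w ∈ veronese k (n+2), ∃ x : MvPolynomial (Fin 3) k,
      aeval g a * w = aeval g x) → a ∈ L := by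
    intro a ha
    refine Module.mem_annihilator.2 fun m => ?_
    obtain ⟨w, rfl⟩ := Submodule.Quotient.mk_surjective _ m
    obtain ⟨x, hx⟩ := ha w.1 w.2
    refine (Submodule.Quotient.mk_eq_zero N).2 ((hN _).2 ⟨x, ?_⟩)
    rw [hsmul, hx]
  refine HB.final (by omega) P hP e.symm L rfl f y hfp (hmemL f ?_) (hmemL y hy) ?_
  · intro w _
    exact ⟨0, by rw [hf0]; simp⟩
  · rintro ⟨c, rfl⟩
    apply hy0
    rw [map_mul, hf0, zero_mul]
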